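/- arXiv:2208.10521 — 4 statements merged into one kernel-verified Lean document; each statement's English description precedes it below -/
import Mathlib

section
/- Let k ≥ 4 be an even integer with k/2 a power of two, suppose the uncorrupted matrices {A°_i}_{i=1,…,n} are k-certifiably C-hypercontractive, and suppose 0 ≤ β < β_max (equivalently c_k < 1). Let μ̃ be a pseudo-distribution of level 2r, for some integer r ≥ k, that satisfies the system L at degree k and minimizes Ẽ_μ̃[((1/n)·∑_{i=1}^n ‖ȳ_i − Ā_iᵀ x‖²)^{k/2}] among all level-2r pseudo-distributions satisfying L at degree k. Then the estimate x̂ := Ẽ_μ̃[x] satisfies err(x̂) ≤ (1 + C₁(k,β)^{2/k})·opt + C₂(k,β)^{2/k}·((1/n)·∑_{i=1}^n ‖y°_i − (A°_i)ᵀ x*‖^k)^{2/k}. -/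
open scoped BigOperators
open MvPolynomial

noncomputable section

/-- A polynomial is a sum of squares. -/
def IsSOS {V : Type*} (p : MvPolynomial V ℝ) : Prop :=
  ∃ (N : ℕ) (q : Fin N → MvPolynomial V ℝ), p = ∑ j, q j ^ 2

/-- A degree-`k` sum-of-squares proof that the system `{A i ≥ 0}` implies `g ≥ 0`:
a family of sos polynomials `P S`, indexed by the subsets `S` of the constraint
indices, with `g = ∑_S P S · ∏_{i∈S} A i` and every summand of degree at most `k`. -/
def SosProof {V ι : Type*} [Fintype ι] [DecidableEq ι]
    (A : ι → MvPolynomial V ℝ) (k : ℕ) (g : MvPolynomial V ℝ) : Prop :=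
  ∃ P : Finset ι → MvPolynomial V ℝ,
    (∀ S, IsSOS (P S)) ∧
    g = ∑ S : Finset ι, P S * ∏ i ∈ S, A i ∧
    ∀ S : Finset ι, (P S * ∏ i ∈ S, A i).totalDegree ≤ k

/-- Pseudo-expectation of `f` under the finitely supported `μ`. -/
def pExpect {V : Type*} (μ : (V → ℝ) →₀ ℝ) (f : (V → ℝ) → ℝ) : ℝ :=
  ∑ z ∈ μ.support, μ z * f z

/-- `μ` is a pseudo-distribution of level `ℓ`: finitely supported, total mass one,
and nonnegative pseudo-expectation on every square of a polynomial of degree `≤ ℓ/2`. -/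
def IsPseudoDist {V : Type*} (μ : (V → ℝ) →₀ ℝ) (ℓ : ℕ) : Prop :=
  (∑ z ∈ μ.support, μ z) = 1 ∧
  ∀ p : MvPolynomial V ℝ, p.totalDegree ≤ ℓ / 2 →
    0 ≤ pExpect μ fun z => MvPolynomial.eval z p ^ 2

/-- A level-`ℓ` pseudo-distribution `μ` satisfies the system `{A i ≥ 0}` at degree `k`. -/
def PDSatisfies {V ι : Type*} [Fintype ι] [DecidableEq ι]
    (μ : (V → ℝ) →₀ ℝ) (ℓ : ℕ) (A : ι → MvPolynomial V ℝ) (k : ℕ) : Prop :=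
  ∀ (S : Finset ι) (h : MvPolynomial V ℝ), IsSOS h →
    h.totalDegree + ∑ i ∈ S, max (A i).totalDegree k ≤ ℓ →
    0 ≤ pExpect μ fun z => MvPolynomial.eval z (h * ∏ i ∈ S, A i)

/-- The polynomial `‖A_iᵀ v‖²` in the indeterminate `v ∈ ℝ^{dx}`. -/
def normAPoly {n dx dy : ℕ} (A : Fin n → Matrix (Fin dx) (Fin dy) ℝ) (i : Fin n) :
    MvPolynomial (Fin dx) ℝ :=
  ∑ j, (∑ k, C (A i k j) * X k) ^ 2

/-- The list `A_1, …, A_n` is `k`-certifiably `C`-hypercontractive: for every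
`1 ≤ t ≤ k/2`, `C(t)^t·((1/n)∑_i ‖A_iᵀ v‖²)^t − (1/n)∑_i ‖A_iᵀ v‖^{2t}` is sos. -/
def Hypercontractive {n dx dy : ℕ} (A : Fin n → Matrix (Fin dx) (Fin dy) ℝ)
    (k : ℕ) (Cf : ℕ → ℝ) : Prop :=
  ∀ t : ℕ, 1 ≤ t → t ≤ k / 2 →
    IsSOS (C (Cf t ^ t) * (C ((n : ℝ)⁻¹) * ∑ i, normAPoly A i) ^ t -
      C ((n : ℝ)⁻¹) * ∑ i, normAPoly A i ^ t)

/-- Variables of the (LTS1) system: `ω ∈ ℝⁿ`, `x ∈ ℝ^{dx}`, `ȳ_i ∈ ℝ^{dy}`,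
`Ā_i ∈ ℝ^{dx×dy}`. -/
abbrev V3 (n dx dy : ℕ) : Type :=
  Fin n ⊕ Fin dx ⊕ (Fin n × Fin dy) ⊕ (Fin n × Fin dx × Fin dy)

def Xw {n dx dy : ℕ} (i : Fin n) : MvPolynomial (V3 n dx dy) ℝ := X (Sum.inl i)
def Xx3 {n dx dy : ℕ} (k : Fin dx) : MvPolynomial (V3 n dx dy) ℝ :=
  X (Sum.inr (Sum.inl k))
def Xy3 {n dx dy : ℕ} (i : Fin n) (j : Fin dy) : MvPolynomial (V3 n dx dy) ℝ :=
  X (Sum.inr (Sum.inr (Sum.inl (i, j))))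
def XA3 {n dx dy : ℕ} (i : Fin n) (k : Fin dx) (j : Fin dy) :
    MvPolynomial (V3 n dx dy) ℝ :=
  X (Sum.inr (Sum.inr (Sum.inr (i, k, j))))

/-- The system `L` of polynomial constraints of problem (LTS1), with `α = 1 − β`:
`ω_i² = ω_i`, `∑ ω_i = αn`, `ω_i·(ȳ_i − y_i) = 0`, `ω_i·(Ā_i − A_i) = 0`
(equalities encoded as pairs of inequalities), and the description of `𝕏`. -/
def sysL {n dx dy mX : ℕ} (y : Fin n → Fin dy → ℝ)
    (A : Fin n → Matrix (Fin dx) (Fin dy) ℝ)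
    (g : Fin mX → MvPolynomial (Fin dx) ℝ) (α : ℝ) :
    Fin n ⊕ Fin n ⊕ Fin 2 ⊕ (Fin n × Fin dy) ⊕ (Fin n × Fin dy) ⊕
        (Fin n × Fin dx × Fin dy) ⊕ (Fin n × Fin dx × Fin dy) ⊕ Fin mX →
      MvPolynomial (V3 n dx dy) ℝ
  | Sum.inl i => Xw i - Xw i ^ 2
  | Sum.inr (Sum.inl i) => Xw i ^ 2 - Xw i
  | Sum.inr (Sum.inr (Sum.inl j)) =>
      if j = 0 then C (α * n) - ∑ i, Xw i else (∑ i, Xw i) - C (α * n)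
  | Sum.inr (Sum.inr (Sum.inr (Sum.inl (i, j)))) => Xw i * (Xy3 i j - C (y i j))
  | Sum.inr (Sum.inr (Sum.inr (Sum.inr (Sum.inl (i, j))))) =>
      -(Xw i * (Xy3 i j - C (y i j)))
  | Sum.inr (Sum.inr (Sum.inr (Sum.inr (Sum.inr (Sum.inl (i, k, j)))))) =>
      Xw i * (XA3 i k j - C (A i k j))
  | Sum.inr (Sum.inr (Sum.inr (Sum.inr (Sum.inr (Sum.inr (Sum.inl (i, k, j))))))) =>
      -(Xw i * (XA3 i k j - C (A i k j)))
  | Sum.inr (Sum.inr (Sum.inr (Sum.inr (Sum.inr (Sum.inr (Sum.inr j)))))) =>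
      rename (fun k => Sum.inr (Sum.inl k)) (g j)

/-- The objective polynomial of (LTS1): `((1/n)·∑_i ‖ȳ_i − Ā_iᵀ x‖²)^{k/2}`. -/
def objLTS1 (n dx dy : ℕ) (k : ℕ) : MvPolynomial (V3 n dx dy) ℝ :=
  (C ((n : ℝ)⁻¹) * ∑ i, ∑ j, (Xy3 i j - ∑ k', XA3 i k' j * Xx3 k') ^ 2) ^ (k / 2)

/-- The error `err(x) = (1/n)·∑_i ‖y°_i − (A°_i)ᵀ x‖²` with respect to the
uncorrupted measurements. -/
def errF {n dx dy : ℕ} (y0 : Fin n → Fin dy → ℝ)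
    (A0 : Fin n → Matrix (Fin dx) (Fin dy) ℝ) (x : Fin dx → ℝ) : ℝ :=
  (n : ℝ)⁻¹ * ∑ i, ∑ j, (y0 i j - ∑ k, A0 i k j * x k) ^ 2

/-!
Write `k = 2 (m + 1)`, `L` for the pseudo-expectation, `q` for the clean empirical loss
`(1/n) ∑ᵢ ‖y°ᵢ - (A°ᵢ)ᵀ x‖²` and `f` for the loss `(1/n) ∑ᵢ ‖ȳᵢ - Āᵢᵀ x‖²` of the program, both
polynomials in the program variables. Let `vᵢ` be `ωᵢ` on uncorrupted indices and `0` elsewhere.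
Where `vᵢ = 1` the two residuals agree, so `q ≤ f + (1/n) ∑ᵢ (1 - vᵢ) ‖y°ᵢ - (A°ᵢ)ᵀ x‖²`. Multiply
by `q ^ m`, apply `L`, and set `E := L (q ^ (m + 1))`. Comparing `L` with the point mass at `x*`
gives `L (f ^ (m + 1)) ≤ opt ^ (m + 1)`, and at most a fraction `2β` of the `vᵢ` vanish, so Hölder's
inequality yields `E ^ (1 / (m + 1)) ≤ opt + δ`, where `δ ^ (m + 1)` is `(2β) ^ m` times the `k`-th
moment of the clean residuals under `L`. Hypercontractivity bounds that moment by `E` and the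
moments at `x*`, and `c_k < 1` lets the contribution of `E` be absorbed. Finally
`err (L x) ≤ L q ≤ E ^ (1 / (m + 1))` by convexity.

The Hölder and Jensen inequalities for `L` come from the sum-of-squares form of Young's inequality
by optimizing over the scaling of one factor.
-/
section SumsOfSquares

theorem isSumSq_pow {R : Type*} [CommSemiring R] {a : R} (ha : IsSumSq a) (m : ℕ) :
    IsSumSq (a ^ m) := by
  simpa using IsSumSq.prod (I := Finset.range m) fun _ _ => ha

theorem isSumSq_map {R S : Type*} [Semiring R] [Semiring S] (f : R →+* S) {a : R}
    (ha : IsSumSq a) : IsSumSq (f a) := by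
  induction ha with
  | zero => simp
  | sq_add b _ ih => simpa only [map_add, map_mul] using (IsSumSq.mul_self (f b)).add ih

theorem isSumSq_smul {R : Type*} [CommSemiring R] [Algebra ℝ R] {c : ℝ} (hc : 0 ≤ c) {a : R}
    (ha : IsSumSq a) : IsSumSq (c • a) := by
  have hsqrt : algebraMap ℝ R c = algebraMap ℝ R √c * algebraMap ℝ R √c := by
    rw [← map_mul, Real.mul_self_sqrt hc]
  rw [Algebra.smul_def, hsqrt]
  exact (IsSumSq.mul_self _).mul ha

variable {R : Type*} [CommRing R] {a b : R}

theorem isSumSq_young (ha : IsSumSq a) (hb : IsSumSq b) (m : ℕ) :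
    IsSumSq (m • a ^ (m + 1) + b ^ (m + 1) - (m + 1) • (a ^ m * b)) := by
  induction m with
  | zero => simp
  | succ m ih =>
    have hstep : (m + 1) • a ^ (m + 1 + 1) + b ^ (m + 1 + 1) - (m + 1 + 1) • (a ^ (m + 1) * b) =
        b * (m • a ^ (m + 1) + b ^ (m + 1) - (m + 1) • (a ^ m * b)) +
          ((m + 1 : ℕ) : R) * a ^ m * (a - b) ^ 2 := by
      simp only [nsmul_eq_mul]
      push_cast
      ring
    rw [hstep]
    exact (hb.mul ih).add
      (((IsSumSq.natCast _).mul (isSumSq_pow ha m)).mul (IsSquare.sq _).isSumSq)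

theorem isSumSq_pow_sub_pow (ha : IsSumSq a) (hab : IsSumSq (b - a)) (m : ℕ) :
    IsSumSq (b ^ m - a ^ m) := by
  have hb : IsSumSq b := by simpa using hab.add ha
  induction m with
  | zero => simp
  | succ m ih =>
    have hstep : b ^ (m + 1) - a ^ (m + 1) = b * (b ^ m - a ^ m) + (b - a) * a ^ m := by ring
    rw [hstep]
    exact (hb.mul ih).add (hab.mul (isSumSq_pow ha m))

theorem isSumSq_sub_mul_pow_sub_pow (ha : IsSumSq a) (hb : IsSumSq b) (m : ℕ) :
    IsSumSq ((a - b) * (a ^ m - b ^ m)) := by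
  induction m with
  | zero => simp
  | succ m ih =>
    have hstep : (a - b) * (a ^ (m + 1) - b ^ (m + 1)) =
        a * ((a - b) * (a ^ m - b ^ m)) + (a - b) ^ 2 * b ^ m := by ring
    rw [hstep]
    exact (ha.mul ih).add ((IsSquare.sq _).isSumSq.mul (isSumSq_pow hb m))

theorem isSumSq_two_pow_mul_sub_add_pow (ha : IsSumSq a) (hb : IsSumSq b) (m : ℕ) :
    IsSumSq (2 ^ m * (a ^ (m + 1) + b ^ (m + 1)) - (a + b) ^ (m + 1)) := by
  induction m with
  | zero => simp
  | succ m ih =>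
    have hstep : 2 ^ (m + 1) * (a ^ (m + 1 + 1) + b ^ (m + 1 + 1)) - (a + b) ^ (m + 1 + 1) =
        (a + b) * (2 ^ m * (a ^ (m + 1) + b ^ (m + 1)) - (a + b) ^ (m + 1)) +
          2 ^ m * ((a - b) * (a ^ (m + 1) - b ^ (m + 1))) := by ring
    rw [hstep]
    exact ((ha.add hb).mul ih).add ((isSumSq_pow (mod_cast IsSumSq.natCast 2) m).mul
      (isSumSq_sub_mul_pow_sub_pow ha hb (m + 1)))

theorem isSumSq_two_pow_mul_sub_sum_add_sq_pow {κ : Type*} (s : Finset κ) (p q : κ → R) (m : ℕ) :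
    IsSumSq (2 ^ (2 * m + 1) * ((∑ j ∈ s, p j ^ 2) ^ (m + 1) + (∑ j ∈ s, q j ^ 2) ^ (m + 1)) -
      (∑ j ∈ s, (p j + q j) ^ 2) ^ (m + 1)) := by
  have hparallelogram : IsSumSq ((2 * ∑ j ∈ s, p j ^ 2 + 2 * ∑ j ∈ s, q j ^ 2) -
      ∑ j ∈ s, (p j + q j) ^ 2) := by
    convert IsSumSq.sum_sq s (p - q) using 1
    simp only [Finset.mul_sum, ← Finset.sum_add_distrib, ← Finset.sum_sub_distrib]
    exact Finset.sum_congr rfl fun j _ => by simp only [Pi.sub_apply]; ring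
  have htwo : IsSumSq (2 : R) := mod_cast IsSumSq.natCast 2
  have hsum := (isSumSq_pow_sub_pow (IsSumSq.sum_sq s _) hparallelogram (m + 1)).add
    (isSumSq_two_pow_mul_sub_add_pow (htwo.mul (IsSumSq.sum_sq s p))
      (htwo.mul (IsSumSq.sum_sq s q)) m)
  refine (congrArg IsSumSq ?_).mp hsum
  ring

end SumsOfSquares

section EmpiricalMoment

variable {ι κ R : Type*} [Fintype ι] [Fintype κ] [CommRing R] [Algebra ℝ R]

/-- The empirical `2t`-th moment `(1/|ι|) ∑ᵢ ‖pᵢ‖^{2t}` of a family of vectors `pᵢ ∈ R^κ`. It is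
used over `ℝ` and over polynomial rings, and vanishes when `ι` is empty. -/
def empiricalMoment (t : ℕ) (p : ι → κ → R) : R :=
  (Fintype.card ι : ℝ)⁻¹ • ∑ i, (∑ j, p i j ^ 2) ^ t

theorem isSumSq_empiricalMoment (t : ℕ) (p : ι → κ → R) : IsSumSq (empiricalMoment t p) :=
  isSumSq_smul (by positivity) (IsSumSq.sum fun _ _ => isSumSq_pow (IsSumSq.sum_sq _ _) t)

theorem empiricalMoment_nonneg (t : ℕ) (p : ι → κ → ℝ) : 0 ≤ empiricalMoment t p :=
  (isSumSq_empiricalMoment t p).nonneg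

theorem map_empiricalMoment {S : Type*} [CommRing S] [Algebra ℝ S] (f : R →ₐ[ℝ] S) (t : ℕ)
    (p : ι → κ → R) : f (empiricalMoment t p) = empiricalMoment t fun i j => f (p i j) := by
  simp only [empiricalMoment, map_smul, map_sum, map_pow]

theorem isSumSq_empiricalMoment_add (p q : ι → κ → R) (m : ℕ) :
    IsSumSq ((2 ^ (2 * m + 1) : ℝ) • (empiricalMoment (m + 1) p + empiricalMoment (m + 1) q) -
      empiricalMoment (m + 1) (p + q)) := by
  convert isSumSq_smul (inv_nonneg.2 (Nat.cast_nonneg (Fintype.card ι)))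
    (IsSumSq.sum (I := Finset.univ) fun i _ =>
      isSumSq_two_pow_mul_sub_sum_add_sq_pow Finset.univ (p i) (q i) m) using 1
  simp only [empiricalMoment, ← smul_add, smul_comm (2 ^ (2 * m + 1) : ℝ), ← smul_sub,
    ← Finset.sum_add_distrib, Finset.smul_sum (r := (2 ^ (2 * m + 1) : ℝ)),
    ← Finset.sum_sub_distrib, Algebra.smul_def (2 ^ (2 * m + 1) : ℝ), map_pow, map_ofNat,
    Pi.add_apply]

theorem isSumSq_empiricalMoment_one_add_pow (p q : ι → κ → R) (m : ℕ) :
    IsSumSq ((2 ^ (2 * m + 1) : ℝ) •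
        (empiricalMoment 1 p ^ (m + 1) + empiricalMoment 1 q ^ (m + 1)) -
      empiricalMoment 1 (p + q) ^ (m + 1)) := by
  have hflat (p : ι → κ → R) : empiricalMoment 1 p =
      (Fintype.card ι : ℝ)⁻¹ • ∑ ij : ι × κ, p ij.1 ij.2 ^ 2 := by
    simp only [empiricalMoment, pow_one, Fintype.sum_prod_type]
  convert isSumSq_smul (pow_nonneg (inv_nonneg.2 (Nat.cast_nonneg (Fintype.card ι))) (m + 1))
    (isSumSq_two_pow_mul_sub_sum_add_sq_pow Finset.univ (fun ij : ι × κ => p ij.1 ij.2)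
      (fun ij => q ij.1 ij.2) m) using 1
  simp only [hflat, smul_pow, ← smul_add, smul_comm (2 ^ (2 * m + 1) : ℝ), ← smul_sub,
    Algebra.smul_def (2 ^ (2 * m + 1) : ℝ), map_pow, map_ofNat, Pi.add_apply]

theorem isSumSq_hypercontractive_add {K : ℝ} (hK : 0 ≤ K) (p q : ι → κ → R) (m : ℕ)
    (hq : IsSumSq (K • empiricalMoment 1 q ^ (m + 1) - empiricalMoment (m + 1) q)) :
    IsSumSq ((2 ^ (2 * m + 1) : ℝ) • empiricalMoment (m + 1) p +
        (K * 2 ^ (4 * m + 2)) •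
          (empiricalMoment 1 (p + q) ^ (m + 1) + empiricalMoment 1 p ^ (m + 1)) -
      empiricalMoment (m + 1) (p + q)) := by
  have hneg : empiricalMoment 1 (-p) = empiricalMoment 1 p := by
    simp only [empiricalMoment, Pi.neg_apply, neg_sq]
  -- Hypercontractivity passes from `q` to `p + q` through `q = (p + q) - p`.
  have hback := isSumSq_empiricalMoment_one_add_pow (p + q) (-p) m
  rw [add_neg_cancel_comm, hneg] at hback
  have hsum := ((isSumSq_empiricalMoment_add p q m).add
    (isSumSq_smul (by positivity : (0 : ℝ) ≤ 2 ^ (2 * m + 1)) hq)).add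
    (isSumSq_smul (by positivity : (0 : ℝ) ≤ 2 ^ (2 * m + 1) * K) hback)
  refine (congrArg IsSumSq ?_).mp hsum
  match_scalars <;> ring

end EmpiricalMoment

section TotalDegree

variable {V R : Type*}

theorem totalDegree_mul_le_of_le [CommSemiring R] {p q : MvPolynomial V R} {a b : ℕ}
    (hp : p.totalDegree ≤ a) (hq : q.totalDegree ≤ b) : (p * q).totalDegree ≤ a + b :=
  (totalDegree_mul p q).trans (add_le_add hp hq)

theorem totalDegree_pow_le_of_le [CommSemiring R] {p : MvPolynomial V R} {a : ℕ}
    (hp : p.totalDegree ≤ a) (m : ℕ) : (p ^ m).totalDegree ≤ a * m := by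
  rw [mul_comm]
  exact (totalDegree_pow p m).trans (Nat.mul_le_mul_left m hp)

theorem totalDegree_sub_le_of_le [CommRing R] {p q : MvPolynomial V R} {a : ℕ}
    (hp : p.totalDegree ≤ a) (hq : q.totalDegree ≤ a) : (p - q).totalDegree ≤ a :=
  (totalDegree_sub p q).trans (max_le hp hq)

theorem totalDegree_smul_le_of_le [CommSemiring R] {S : Type*} [CommSemiring S] [Module S R]
    (c : S) {p : MvPolynomial V R} {a : ℕ} (hp : p.totalDegree ≤ a) : (c • p).totalDegree ≤ a :=
  (totalDegree_smul_le c p).trans hp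

theorem totalDegree_sum_sq_le [CommSemiring R] {κ : Type*} [Fintype κ]
    {p : κ → MvPolynomial V R} {d : ℕ} (hp : ∀ j, (p j).totalDegree ≤ d) :
    (∑ j, p j ^ 2).totalDegree ≤ 2 * d :=
  totalDegree_finsetSum_le fun j _ =>
    (totalDegree_pow_le_of_le (hp j) 2).trans_eq (mul_comm d 2)

theorem totalDegree_empiricalMoment_le {ι κ : Type*} [Fintype ι] [Fintype κ]
    {p : ι → κ → MvPolynomial V ℝ} {d : ℕ} (hp : ∀ i j, (p i j).totalDegree ≤ d) (t : ℕ) :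
    (empiricalMoment t p).totalDegree ≤ 2 * d * t :=
  totalDegree_smul_le_of_le _ <| totalDegree_finsetSum_le fun i _ =>
    totalDegree_pow_le_of_le (totalDegree_sum_sq_le (hp i)) t

theorem exists_mul_eq_monomial [CommSemiring R] {s : V →₀ ℕ} {a b : ℕ} (hs : s.degree ≤ a + b)
    (c : R) : ∃ p q : MvPolynomial V R,
      p.totalDegree ≤ a ∧ q.totalDegree ≤ b ∧ monomial s c = p * q := by
  obtain ⟨t, hts, ht⟩ := Finsupp.exists_le_degree_eq s _ (min_le_left s.degree a)
  have hsplit : (s - t).degree + t.degree = s.degree := by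
    rw [← map_add, tsub_add_cancel_of_le hts]
  refine ⟨monomial t 1, monomial (s - t) c, (totalDegree_monomial_le _ _).trans ?_,
    (totalDegree_monomial_le _ _).trans ?_, ?_⟩
  · change t.degree ≤ a
    omega
  · change (s - t).degree ≤ b
    omega
  · rw [monomial_mul, one_mul, add_tsub_cancel_of_le hts]

end TotalDegree

section Functionals

variable {V : Type*} {L : MvPolynomial V ℝ →ₗ[ℝ] ℝ} {d : ℕ}

/-- A linear functional on polynomials that is nonnegative on the sums of squares of degree at
most `d`, as the pseudo-expectation of a level-`d` pseudo-distribution is. -/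
def PositiveUpTo (L : MvPolynomial V ℝ →ₗ[ℝ] ℝ) (d : ℕ) : Prop :=
  ∀ ⦃p⦄, IsSumSq p → p.totalDegree ≤ d → 0 ≤ L p

/-- The functional `L` sees the equation `f = 0` against all multipliers of degree at most `d`. -/
def VanishesUpTo (L : MvPolynomial V ℝ →ₗ[ℝ] ℝ) (d : ℕ) (f : MvPolynomial V ℝ) : Prop :=
  ∀ ⦃q⦄, q.totalDegree ≤ d → L (q * f) = 0

-- Split each monomial of the multiplier into two factors of degree at most `d` and polarize.
theorem vanishesUpTo_of_isSumSq {f : MvPolynomial V ℝ}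
    (hf : ∀ h, IsSumSq h → h.totalDegree ≤ 2 * d → L (h * f) = 0) : VanishesUpTo L (2 * d) f := by
  have hmul {a b : MvPolynomial V ℝ} (ha : a.totalDegree ≤ d) (hb : b.totalDegree ≤ d) :
      L (a * b * f) = 0 := by
    have hsq {c : MvPolynomial V ℝ} (hc : c.totalDegree ≤ d) : L (c ^ 2 * f) = 0 :=
      hf _ (IsSquare.sq c).isSumSq ((totalDegree_pow_le_of_le hc 2).trans_eq (mul_comm d 2))
    have hpolar : (4 : ℝ) • (a * b * f) = (a + b) ^ 2 * f - (a - b) ^ 2 * f := by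
      rw [Algebra.smul_def, map_ofNat]
      ring
    have hL := congrArg L hpolar
    rw [map_smul, map_sub, hsq ((totalDegree_add a b).trans (max_le ha hb)),
      hsq (totalDegree_sub_le_of_le ha hb), smul_eq_mul] at hL
    linarith
  intro q hq
  rw [as_sum q, Finset.sum_mul, map_sum]
  refine Finset.sum_eq_zero fun s hs => ?_
  obtain ⟨a, b, ha, hb, hab⟩ := exists_mul_eq_monomial (a := d) (b := d)
    ((le_totalDegree hs).trans (hq.trans_eq (two_mul d))) (coeff s q)
  rw [hab]
  exact hmul ha hb

namespace VanishesUpTo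

variable {f g : MvPolynomial V ℝ}

theorem mono {c : ℕ} (hf : VanishesUpTo L d f) (hcd : c ≤ d) : VanishesUpTo L c f :=
  fun _ hq => hf (hq.trans hcd)

theorem sub (hf : VanishesUpTo L d f) (hg : VanishesUpTo L d g) : VanishesUpTo L d (f - g) :=
  fun q hq => by rw [mul_sub, map_sub, hf hq, hg hq, sub_zero]

theorem sum {ι : Type*} {s : Finset ι} {f : ι → MvPolynomial V ℝ}
    (hf : ∀ i ∈ s, VanishesUpTo L d (f i)) : VanishesUpTo L d (∑ i ∈ s, f i) := fun q hq => by
  rw [Finset.mul_sum, map_sum]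
  exact Finset.sum_eq_zero fun i hi => hf i hi hq

theorem mul_left {c : ℕ} (hf : VanishesUpTo L (d + c) f) (hg : g.totalDegree ≤ c) :
    VanishesUpTo L d (g * f) := fun q hq => by
  rw [← mul_assoc]
  exact hf (totalDegree_mul_le_of_le hq hg)

end VanishesUpTo

theorem pow_succ_le_of_young_of_pos {x u v : ℝ} (hx : 0 ≤ x) (hu : 0 < u) (hv : 0 < v) (m : ℕ)
    (hyoung : ∀ c : ℝ, 0 < c → (m + 1) * (c * x) ≤ m * u + c ^ (m + 1) * v) :
    x ^ (m + 1) ≤ u ^ m * v := by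
  obtain ⟨c, hc, hcpow⟩ : ∃ c : ℝ, 0 < c ∧ c ^ (m + 1) = u / v :=
    ⟨(u / v) ^ ((m + 1 : ℕ) : ℝ)⁻¹, by positivity,
      Real.rpow_inv_natCast_pow (by positivity) m.succ_ne_zero⟩
  have hcx : c * x ≤ u := by
    have hy := hyoung c hc
    rw [hcpow, div_mul_cancel₀ u hv.ne', ← add_one_mul] at hy
    exact le_of_mul_le_mul_left hy (by positivity)
  have hpow : u * x ^ (m + 1) ≤ u * (u ^ m * v) :=
    calc u * x ^ (m + 1) = (c * x) ^ (m + 1) * v := by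
          rw [mul_pow, hcpow, div_mul_eq_mul_div, div_mul_cancel₀ _ hv.ne']
      _ ≤ u ^ (m + 1) * v := by gcongr
      _ = u * (u ^ m * v) := by ring
  exact le_of_mul_le_mul_left hpow hu

theorem pow_succ_le_of_young {x u v : ℝ} (hx : 0 ≤ x) (hu : 0 ≤ u) (hv : 0 ≤ v) (m : ℕ)
    (hyoung : ∀ c : ℝ, 0 < c → (m + 1) * (c * x) ≤ m * u + c ^ (m + 1) * v) :
    x ^ (m + 1) ≤ u ^ m * v := by
  have hcont : Continuous fun ε : ℝ => (u + ε) ^ m * (v + ε) := by fun_prop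
  have hlim := (hcont.tendsto 0).mono_left (nhdsWithin_le_nhds (s := Set.Ioi 0))
  rw [add_zero, add_zero] at hlim
  refine ge_of_tendsto hlim ?_
  filter_upwards [self_mem_nhdsWithin] with ε hε
  rw [Set.mem_Ioi] at hε
  refine pow_succ_le_of_young_of_pos hx (by positivity) (by positivity) m fun c hc =>
    (hyoung c hc).trans ?_
  gcongr <;> linarith

namespace PositiveUpTo

theorem mono {c : ℕ} (hL : PositiveUpTo L d) (hcd : c ≤ d) : PositiveUpTo L c :=
  fun _ hp hdeg => hL hp (hdeg.trans hcd)

-- Modulo `v² = v`, multiplication by `v` is multiplication by the square `v²`.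
theorem comp_mulRight {v : MvPolynomial V ℝ} (hL : PositiveUpTo L (d + 2))
    (hdeg : v.totalDegree ≤ 1) (hv : VanishesUpTo L d (v ^ 2 - v)) :
    PositiveUpTo (L ∘ₗ LinearMap.mulRight ℝ v) d := fun h hh hhd => by
  have hsq : 0 ≤ L (h * v ^ 2) := hL (hh.mul (IsSquare.sq v).isSumSq)
    (totalDegree_mul_le_of_le hhd (totalDegree_pow_le_of_le hdeg 2))
  have hidem := hv hhd
  rw [mul_sub, map_sub, sub_eq_zero] at hidem
  simpa only [LinearMap.comp_apply, LinearMap.mulRight_apply, ← hidem] using hsq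

theorem comp_mulRight_one_sub {v : MvPolynomial V ℝ} (hL : PositiveUpTo L (d + 2))
    (hdeg : v.totalDegree ≤ 1) (hv : VanishesUpTo L d (v ^ 2 - v)) :
    PositiveUpTo (L ∘ₗ LinearMap.mulRight ℝ (1 - v)) d := by
  refine hL.comp_mulRight (totalDegree_sub_le_of_le (by simp) hdeg) ?_
  have hidem : (1 - v) ^ 2 - (1 - v) = v ^ 2 - v := by ring
  rwa [hidem]

theorem young {a b : MvPolynomial V ℝ} {m : ℕ} (hL : PositiveUpTo L (d * (m + 1)))
    (ha : IsSumSq a) (hb : IsSumSq b) (had : a.totalDegree ≤ d) (hbd : b.totalDegree ≤ d)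
    {c : ℝ} (hc : 0 < c) :
    (m + 1) * (c * L (a ^ m * b)) ≤ m * L (a ^ (m + 1)) + c ^ (m + 1) * L (b ^ (m + 1)) := by
  have hcb := totalDegree_smul_le_of_le c hbd
  have hpos := hL (isSumSq_young ha (isSumSq_smul hc.le hb) m) <|
    totalDegree_sub_le_of_le
      ((totalDegree_add _ _).trans (max_le
        (totalDegree_smul_le_of_le m (totalDegree_pow_le_of_le had (m + 1)))
        (totalDegree_pow_le_of_le hcb (m + 1))))
      (totalDegree_smul_le_of_le (m + 1)
        (totalDegree_mul_le_of_le (totalDegree_pow_le_of_le had m) hcb))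
  rw [smul_pow, mul_smul_comm, map_sub, map_add, map_nsmul, map_nsmul, map_smul, map_smul,
    nsmul_eq_mul, nsmul_eq_mul, smul_eq_mul, smul_eq_mul, Nat.cast_succ] at hpos
  linarith

end PositiveUpTo

-- Optimizing Young's inequality over the scaling of `b` turns it into Hölder's inequality.
theorem sum_map_pow_mul_pow_le {ι : Type*} [Fintype ι] {M : ι → MvPolynomial V ℝ →ₗ[ℝ] ℝ} {m : ℕ}
    (hM : ∀ i, PositiveUpTo (M i) (d * (m + 1))) {a b : ι → MvPolynomial V ℝ}
    (ha : ∀ i, IsSumSq (a i)) (hb : ∀ i, IsSumSq (b i)) (had : ∀ i, (a i).totalDegree ≤ d)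
    (hbd : ∀ i, (b i).totalDegree ≤ d) :
    (∑ i, M i (a i ^ m * b i)) ^ (m + 1) ≤
      (∑ i, M i (a i ^ (m + 1))) ^ m * ∑ i, M i (b i ^ (m + 1)) := by
  refine pow_succ_le_of_young
    (Finset.sum_nonneg fun i _ => hM i ((isSumSq_pow (ha i) m).mul (hb i))
      (totalDegree_mul_le_of_le (totalDegree_pow_le_of_le (had i) m) (hbd i)))
    (Finset.sum_nonneg fun i _ => hM i (isSumSq_pow (ha i) _) (totalDegree_pow_le_of_le (had i) _))
    (Finset.sum_nonneg fun i _ => hM i (isSumSq_pow (hb i) _) (totalDegree_pow_le_of_le (hbd i) _))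
    m fun c hc => ?_
  simp only [Finset.mul_sum, ← Finset.sum_add_distrib]
  exact Finset.sum_le_sum fun i _ => (hM i).young (ha i) (hb i) (had i) (hbd i) hc

namespace PositiveUpTo

theorem map_pow_mul_pow_le {a b : MvPolynomial V ℝ} {m : ℕ} (hL : PositiveUpTo L (d * (m + 1)))
    (ha : IsSumSq a) (hb : IsSumSq b) (had : a.totalDegree ≤ d) (hbd : b.totalDegree ≤ d) :
    L (a ^ m * b) ^ (m + 1) ≤ L (a ^ (m + 1)) ^ m * L (b ^ (m + 1)) := by
  simpa using sum_map_pow_mul_pow_le (fun _ : Unit => hL) (fun _ => ha) (fun _ => hb)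
    (fun _ => had) fun _ => hbd

theorem map_pow_le {b : MvPolynomial V ℝ} {m : ℕ} (hL : PositiveUpTo L (d * (m + 1)))
    (hone : L 1 = 1) (hb : IsSumSq b) (hbd : b.totalDegree ≤ d) :
    L b ^ (m + 1) ≤ L (b ^ (m + 1)) := by
  simpa [hone] using hL.map_pow_mul_pow_le IsSumSq.one hb (by simp) hbd

theorem sq_map_le {p : MvPolynomial V ℝ} (hL : PositiveUpTo L (2 * d)) (hone : L 1 = 1)
    (hp : p.totalDegree ≤ d) : L p ^ 2 ≤ L (p ^ 2) := by
  have hvar : 0 ≤ L ((p - C (L p)) ^ 2) := hL (IsSquare.sq _).isSumSq <| by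
    rw [mul_comm]
    exact totalDegree_pow_le_of_le (totalDegree_sub_le_of_le hp (by simp)) 2
  have hexpand : (p - C (L p)) ^ 2 = p ^ 2 - (2 * L p) • p + (L p ^ 2) • 1 := by
    simp only [smul_eq_C_mul, C_mul, C_pow, map_ofNat]
    ring
  rw [hexpand, map_add, map_sub, map_smul, map_smul, hone, smul_eq_mul, smul_eq_mul] at hvar
  linarith

theorem empiricalMoment_one_map_le {ι κ : Type*} [Fintype ι] [Fintype κ]
    {p : ι → κ → MvPolynomial V ℝ} (hL : PositiveUpTo L (2 * d)) (hone : L 1 = 1)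
    (hp : ∀ i j, (p i j).totalDegree ≤ d) :
    empiricalMoment 1 (fun i j => L (p i j)) ≤ L (empiricalMoment 1 p) := by
  simp only [empiricalMoment, pow_one, map_smul, map_sum, smul_eq_mul]
  gcongr with i _ j
  exact hL.sq_map_le hone (hp i j)

theorem map_empiricalMoment_le {ι κ : Type*} [Fintype ι] [Fintype κ] {m : ℕ} {K : ℝ}
    {Q : ι → κ → MvPolynomial V ℝ} (hL : PositiveUpTo L (2 * (m + 1))) (hone : L 1 = 1)
    (hQ : ∀ i j, (Q i j).totalDegree ≤ 1) (hK : 0 ≤ K) (p : ι → κ → ℝ)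
    (hhyper : IsSumSq (K • empiricalMoment 1 (fun i j => Q i j - C (p i j)) ^ (m + 1) -
      empiricalMoment (m + 1) fun i j => Q i j - C (p i j))) :
    L (empiricalMoment (m + 1) Q) ≤ 2 ^ (2 * m + 1) * empiricalMoment (m + 1) p +
      K * 2 ^ (4 * m + 2) *
        (L (empiricalMoment 1 Q ^ (m + 1)) + empiricalMoment 1 p ^ (m + 1)) := by
  have hconst (t : ℕ) : empiricalMoment t (fun i j => (C (p i j) : MvPolynomial V ℝ)) =
      empiricalMoment t p • 1 := by
    rw [← Algebra.algebraMap_eq_smul_one]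
    exact (map_empiricalMoment (Algebra.ofId ℝ (MvPolynomial V ℝ)) t p).symm
  have hQsplit : (fun i j => C (p i j)) + (fun i j => Q i j - C (p i j)) = Q := by
    ext1 i
    ext1 j
    exact add_sub_cancel _ _
  have hsos := isSumSq_hypercontractive_add hK (fun i j => C (p i j)) _ m hhyper
  rw [hQsplit, hconst, hconst, smul_pow, one_pow] at hsos
  have hmoment := totalDegree_empiricalMoment_le hQ (m + 1)
  have hsecond := totalDegree_pow_le_of_le (totalDegree_empiricalMoment_le hQ 1) (m + 1)
  have hpos := hL hsos <| totalDegree_sub_le_of_le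
    ((totalDegree_add _ _).trans (max_le
      (totalDegree_smul_le_of_le _ (totalDegree_smul_le_of_le _ (by simp)))
      (totalDegree_smul_le_of_le _ ((totalDegree_add _ _).trans
        (max_le (by simpa using hsecond) (totalDegree_smul_le_of_le _ (by simp)))))))
    (by simpa using hmoment)
  simp only [map_sub, map_add, map_smul, hone, smul_eq_mul, mul_one] at hpos
  linarith

end PositiveUpTo

end Functionals

section RealEstimates

theorem le_add_of_pow_succ_le {e x y a b : ℝ} {m : ℕ} (he : 0 ≤ e) (ha : 0 ≤ a) (hb : 0 ≤ b)
    (hxy : e ^ (m + 1) ≤ x + y) (hx : x ^ (m + 1) ≤ (e ^ (m + 1)) ^ m * a ^ (m + 1))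
    (hy : y ^ (m + 1) ≤ (e ^ (m + 1)) ^ m * b ^ (m + 1)) : e ≤ a + b := by
  have hroot {z c : ℝ} (hc : 0 ≤ c) (hz : z ^ (m + 1) ≤ (e ^ (m + 1)) ^ m * c ^ (m + 1)) :
      z ≤ e ^ m * c := by
    rw [pow_right_comm, ← mul_pow] at hz
    exact le_of_pow_le_pow_left₀ m.succ_ne_zero (by positivity) hz
  rcases he.eq_or_lt with rfl | hpos
  · positivity
  · refine le_of_mul_le_mul_left ?_ (pow_pos hpos m)
    calc e ^ m * e = e ^ (m + 1) := (pow_succ e m).symm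
      _ ≤ x + y := hxy
      _ ≤ e ^ m * (a + b) := by linarith [hroot ha hx, hroot hb hy]

theorem le_of_le_moment_bound {b K D E O T c : ℝ} {m : ℕ} (hb : 0 ≤ b) (hK : 0 ≤ K) (hD : 0 ≤ D)
    (hO : 0 ≤ O) (hT : 0 ≤ T) (hE : E ≤ 2 ^ m * (O + D))
    (hDE : D ≤ b * (2 ^ (2 * m + 1) * T + K * 2 ^ (4 * m + 2) * (E + O)))
    (hc : c = b * K * 2 ^ (m + 1) * 2 ^ (4 * (m + 1))) (hc1 : c < 1) :
    D ≤ c / (1 - c) * O + b * (2 ^ (2 * (m + 1)) + K * 2 ^ (4 * (m + 1))) / (1 - c) * T := by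
  have hloop : D ≤ b * 2 ^ (2 * m + 1) * T +
      b * K * 2 ^ (4 * m + 2) * (2 ^ m * (O + D) + O) :=
    calc D ≤ b * (2 ^ (2 * m + 1) * T + K * 2 ^ (4 * m + 2) * (E + O)) := hDE
      _ ≤ b * (2 ^ (2 * m + 1) * T + K * 2 ^ (4 * m + 2) * (2 ^ m * (O + D) + O)) := by gcongr
      _ = _ := by ring
  have hO_le : b * K * 2 ^ (4 * m + 2) * O ≤ b * K * 2 ^ (4 * m + 2) * (2 ^ m * O) := by
    gcongr
    exact le_mul_of_one_le_left hO (one_le_pow₀ one_le_two)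
  have hc_eq : c = 8 * (b * K * 2 ^ (4 * m + 2) * 2 ^ m) := by rw [hc]; ring
  have habsorb : D * (1 - c) ≤
      c * O + b * (2 ^ (2 * (m + 1)) + K * 2 ^ (4 * (m + 1))) * T := by
    have hTK : 0 ≤ b * (K * 2 ^ (4 * (m + 1))) * T := by positivity
    have hOc : 0 ≤ b * K * 2 ^ (4 * m + 2) * 2 ^ m * O := by positivity
    have hDc : 0 ≤ b * K * 2 ^ (4 * m + 2) * 2 ^ m * D := by positivity
    have htwo : (2 : ℝ) ^ (2 * (m + 1)) = 2 * 2 ^ (2 * m + 1) := by ring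
    rw [hc_eq, htwo]
    linarith
  calc D ≤ (c * O + b * (2 ^ (2 * (m + 1)) + K * 2 ^ (4 * (m + 1))) * T) / (1 - c) :=
        (le_div_iff₀ (sub_pos.2 hc1)).2 habsorb
    _ = _ := by ring

theorem le_rpow_add_rpow_of_pow_succ_le {δ C₁ C₂ O T : ℝ} {m : ℕ} (hδ : 0 ≤ δ) (hC₁ : 0 ≤ C₁)
    (hC₂ : 0 ≤ C₂) (hO : 0 ≤ O) (hT : 0 ≤ T) (h : δ ^ (m + 1) ≤ C₁ * O ^ (m + 1) + C₂ * T) :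
    δ ≤ C₁ ^ ((m + 1 : ℕ) : ℝ)⁻¹ * O + C₂ ^ ((m + 1 : ℕ) : ℝ)⁻¹ * T ^ ((m + 1 : ℕ) : ℝ)⁻¹ := by
  have hinv_le : ((m + 1 : ℕ) : ℝ)⁻¹ ≤ 1 := inv_le_one_of_one_le₀ (mod_cast m.succ_pos)
  calc δ = (δ ^ (m + 1)) ^ ((m + 1 : ℕ) : ℝ)⁻¹ :=
        (Real.pow_rpow_inv_natCast hδ m.succ_ne_zero).symm
    _ ≤ (C₁ * O ^ (m + 1) + C₂ * T) ^ ((m + 1 : ℕ) : ℝ)⁻¹ := by gcongr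
    _ ≤ (C₁ * O ^ (m + 1)) ^ ((m + 1 : ℕ) : ℝ)⁻¹ + (C₂ * T) ^ ((m + 1 : ℕ) : ℝ)⁻¹ :=
        Real.rpow_add_le_add_rpow (by positivity) (by positivity) (by positivity) hinv_le
    _ = _ := by
        rw [Real.mul_rpow hC₁ (by positivity), Real.mul_rpow hC₂ hT,
          Real.pow_rpow_inv_natCast hO m.succ_ne_zero]

theorem le_rpow_of_self_bounded {ε K a E O T R X Y c : ℝ} {m : ℕ} (hε : 0 ≤ ε) (hK : 0 ≤ K)
    (hE : 0 ≤ E) (hO : 0 ≤ O) (hT : 0 ≤ T) (hR : 0 ≤ R) (haE : a ^ (m + 1) ≤ E)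
    (hEXY : E ≤ X + Y) (hX : X ^ (m + 1) ≤ E ^ m * O ^ (m + 1))
    (hY : Y ^ (m + 1) ≤ (ε * E) ^ m * R)
    (hRE : R ≤ 2 ^ (2 * m + 1) * T + K * 2 ^ (4 * m + 2) * (E + O ^ (m + 1)))
    (hc : c = ε ^ m * K * 2 ^ (m + 1) * 2 ^ (4 * (m + 1))) (hc1 : c < 1) :
    a ≤ (1 + (c / (1 - c)) ^ ((m + 1 : ℕ) : ℝ)⁻¹) * O +
      (ε ^ m * (2 ^ (2 * (m + 1)) + K * 2 ^ (4 * (m + 1))) / (1 - c)) ^ ((m + 1 : ℕ) : ℝ)⁻¹ *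
        T ^ ((m + 1 : ℕ) : ℝ)⁻¹ := by
  have hroot {s : ℝ} (hs : 0 ≤ s) : ∃ t, 0 ≤ t ∧ t ^ (m + 1) = s :=
    ⟨s ^ ((m + 1 : ℕ) : ℝ)⁻¹, by positivity, Real.rpow_inv_natCast_pow hs m.succ_ne_zero⟩
  obtain ⟨e, he, rfl⟩ := hroot hE
  obtain ⟨δ, hδ, hδR⟩ := hroot (mul_nonneg (pow_nonneg hε m) hR)
  have heδ : e ≤ O + δ := le_add_of_pow_succ_le he hO hδ hEXY hX <| hY.trans_eq <| by
    rw [hδR, mul_pow]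
    ring
  have hEδ : e ^ (m + 1) ≤ 2 ^ m * (O ^ (m + 1) + δ ^ (m + 1)) :=
    (pow_le_pow_left₀ he heδ _).trans (add_pow_le hO hδ (m + 1))
  have hδ_pow := le_of_le_moment_bound (pow_nonneg hε m) hK (pow_nonneg hδ _) (pow_nonneg hO _)
    hT hEδ (hδR.trans_le (mul_le_mul_of_nonneg_left hRE (pow_nonneg hε m))) hc hc1
  have hc0 : 0 ≤ c := by rw [hc]; positivity
  have hc1' : 0 ≤ 1 - c := (sub_pos.2 hc1).le
  have hδ_le := le_rpow_add_rpow_of_pow_succ_le hδ (div_nonneg hc0 hc1')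
    (div_nonneg (by positivity) hc1') hO hT hδ_pow
  have hae : a ≤ e := le_of_pow_le_pow_left₀ m.succ_ne_zero he haE
  linarith

end RealEstimates

section PseudoSelection

variable {ι κ V : Type*} [Fintype ι] {L : MvPolynomial V ℝ →ₗ[ℝ] ℝ}

/-- `L` behaves like an expectation under which the `v i` are `0/1`-valued indicators of a random
subset of `ι`, missing on average at most a fraction `ε` of the indices, on which the vectors
`F i` and `Q i` coincide. In the application `Q i` is the residual of the `i`-th clean measurement,
`F i` that of the `i`-th measurement of the program, and the subset consists of the selected
uncorrupted indices. -/
structure IsPseudoSelection (L : MvPolynomial V ℝ →ₗ[ℝ] ℝ) (m : ℕ) (ε : ℝ)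
    (v : ι → MvPolynomial V ℝ) (Q F : ι → κ → MvPolynomial V ℝ) : Prop where
  map_one : L 1 = 1
  positiveUpTo : PositiveUpTo L (4 * (m + 1))
  totalDegree_indicator_le : ∀ i, (v i).totalDegree ≤ 1
  totalDegree_left_le : ∀ i j, (Q i j).totalDegree ≤ 1
  totalDegree_right_le : ∀ i j, (F i j).totalDegree ≤ 2
  vanishesUpTo_idempotent : ∀ i, VanishesUpTo L (2 * (m + 1)) (v i ^ 2 - v i)
  vanishesUpTo_mul_sub : ∀ i j, VanishesUpTo L (2 * m + 1) (v i * (F i j - Q i j))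
  average_map_mul_one_sub_le : ∀ ⦃h⦄, IsSumSq h → h.totalDegree ≤ 2 * (m + 1) →
    (Fintype.card ι : ℝ)⁻¹ * ∑ i, L (h * (1 - v i)) ≤ ε * L h

namespace IsPseudoSelection

variable {m : ℕ} {ε : ℝ} {v : ι → MvPolynomial V ℝ} {Q F : ι → κ → MvPolynomial V ℝ}
  {h : MvPolynomial V ℝ}

theorem positiveUpTo_mulRight (hs : IsPseudoSelection L m ε v Q F) (i : ι) :
    PositiveUpTo (L ∘ₗ LinearMap.mulRight ℝ (v i)) (2 * (m + 1)) :=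
  (hs.positiveUpTo.mono (by omega)).comp_mulRight (hs.totalDegree_indicator_le i)
    (hs.vanishesUpTo_idempotent i)

theorem positiveUpTo_mulRight_one_sub (hs : IsPseudoSelection L m ε v Q F) (i : ι) :
    PositiveUpTo (L ∘ₗ LinearMap.mulRight ℝ (1 - v i)) (2 * (m + 1)) :=
  (hs.positiveUpTo.mono (by omega)).comp_mulRight_one_sub (hs.totalDegree_indicator_le i)
    (hs.vanishesUpTo_idempotent i)

theorem map_mul_sq_mul_le (hs : IsPseudoSelection L m ε v Q F) (hh : IsSumSq h)
    (hhd : h.totalDegree ≤ 2 * m) (i : ι) (j : κ) :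
    L (h * Q i j ^ 2 * v i) ≤ L (h * F i j ^ 2) := by
  have hv := hs.totalDegree_indicator_le i
  have hQ := hs.totalDegree_left_le i j
  have hF := hs.totalDegree_right_le i j
  have hdiff : 0 ≤ L (h * (F i j - v i * Q i j) ^ 2) :=
    hs.positiveUpTo (hh.mul (IsSquare.sq _).isSumSq) <|
      (totalDegree_mul_le_of_le hhd (totalDegree_pow_le_of_le
        (totalDegree_sub_le_of_le hF (totalDegree_mul_le_of_le hv hQ)) 2)).trans (by omega)
  have hidem : L (h * Q i j ^ 2 * (v i ^ 2 - v i)) = 0 :=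
    hs.vanishesUpTo_idempotent i (totalDegree_mul_le_of_le hhd (totalDegree_pow_le_of_le hQ 2))
  have hagree : L (h * Q i j * (v i * (F i j - Q i j))) = 0 :=
    hs.vanishesUpTo_mul_sub i j (totalDegree_mul_le_of_le hhd hQ)
  have hexpand : h * (F i j - v i * Q i j) ^ 2 = h * F i j ^ 2 - h * Q i j ^ 2 * v i +
      h * Q i j ^ 2 * (v i ^ 2 - v i) - (2 : ℝ) • (h * Q i j * (v i * (F i j - Q i j))) := by
    rw [Algebra.smul_def, map_ofNat]
    ring
  rw [hexpand, map_sub, map_add, map_sub, map_smul, hidem, hagree, smul_zero] at hdiff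
  linarith

theorem map_mul_one_sub_le (hs : IsPseudoSelection L m ε v Q F) (hh : IsSumSq h)
    (hhd : h.totalDegree ≤ 2 * (m + 1)) (i : ι) : L (h * (1 - v i)) ≤ L h := by
  have hkept := hs.positiveUpTo_mulRight i hh hhd
  rw [LinearMap.comp_apply, LinearMap.mulRight_apply] at hkept
  rw [mul_sub, map_sub, mul_one]
  linarith

variable [Fintype κ]

theorem map_mul_empiricalMoment_one_le (hs : IsPseudoSelection L m ε v Q F) (hh : IsSumSq h)
    (hhd : h.totalDegree ≤ 2 * m) :
    L (h * empiricalMoment 1 Q) ≤ L (h * empiricalMoment 1 F) +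
      (Fintype.card ι : ℝ)⁻¹ * ∑ i, L (h * (∑ j, Q i j ^ 2) * (1 - v i)) := by
  have hsplit (i : ι) : L (h * ∑ j, Q i j ^ 2) ≤
      L (h * ∑ j, F i j ^ 2) + L (h * (∑ j, Q i j ^ 2) * (1 - v i)) :=
    calc L (h * ∑ j, Q i j ^ 2)
        = ∑ j, L (h * Q i j ^ 2 * v i) + L (h * (∑ j, Q i j ^ 2) * (1 - v i)) := by
          rw [← map_sum, ← Finset.sum_mul, ← Finset.mul_sum, ← map_add, ← mul_add,
            add_sub_cancel, mul_one]
      _ ≤ ∑ j, L (h * F i j ^ 2) + L (h * (∑ j, Q i j ^ 2) * (1 - v i)) := by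
          gcongr with j
          exact hs.map_mul_sq_mul_le hh hhd i j
      _ = _ := by rw [← map_sum, ← Finset.mul_sum]
  have hmoment (p : ι → κ → MvPolynomial V ℝ) : L (h * empiricalMoment 1 p) =
      (Fintype.card ι : ℝ)⁻¹ * ∑ i, L (h * ∑ j, p i j ^ 2) := by
    simp only [empiricalMoment, pow_one, mul_smul_comm, map_smul, Finset.mul_sum, map_sum,
      smul_eq_mul]
  rw [hmoment, hmoment, ← mul_add, ← Finset.sum_add_distrib]
  gcongr with i
  exact hsplit i

theorem average_map_mul_one_sub_pow_le (hs : IsPseudoSelection L m ε v Q F)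
    (hh : IsSumSq h) (hhd : h.totalDegree ≤ 2) :
    ((Fintype.card ι : ℝ)⁻¹ * ∑ i, L (h ^ m * (∑ j, Q i j ^ 2) * (1 - v i))) ^ (m + 1) ≤
      (ε * L (h ^ (m + 1))) ^ m * L (empiricalMoment (m + 1) Q) := by
  have hsq (i : ι) : IsSumSq (∑ j, Q i j ^ 2) := IsSumSq.sum_sq _ _
  have hsqd (i : ι) : (∑ j, Q i j ^ 2).totalDegree ≤ 2 :=
    totalDegree_sum_sq_le (hs.totalDegree_left_le i)
  have haverage_nonneg {f : ι → MvPolynomial V ℝ} (hf : ∀ i, IsSumSq (f i))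
      (hfd : ∀ i, (f i).totalDegree ≤ 2) :
      0 ≤ (Fintype.card ι : ℝ)⁻¹ * ∑ i, L (f i ^ (m + 1) * (1 - v i)) :=
    mul_nonneg (by positivity) <| Finset.sum_nonneg fun i _ =>
      hs.positiveUpTo_mulRight_one_sub i (isSumSq_pow (hf i) _) (totalDegree_pow_le_of_le (hfd i) _)
  have hh_nonneg := haverage_nonneg (fun _ => hh) fun _ => hhd
  have haverage_le := hs.average_map_mul_one_sub_le (isSumSq_pow hh _)
    (totalDegree_pow_le_of_le hhd (m + 1))
  have hholder := sum_map_pow_mul_pow_le hs.positiveUpTo_mulRight_one_sub (fun _ => hh) hsq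
    (fun _ => hhd) hsqd
  simp only [LinearMap.comp_apply, LinearMap.mulRight_apply] at hholder
  calc ((Fintype.card ι : ℝ)⁻¹ * ∑ i, L (h ^ m * (∑ j, Q i j ^ 2) * (1 - v i))) ^ (m + 1)
      ≤ (Fintype.card ι : ℝ)⁻¹ ^ (m + 1) * ((∑ i, L (h ^ (m + 1) * (1 - v i))) ^ m *
          ∑ i, L ((∑ j, Q i j ^ 2) ^ (m + 1) * (1 - v i))) := by
        rw [mul_pow]
        gcongr
    _ = ((Fintype.card ι : ℝ)⁻¹ * ∑ i, L (h ^ (m + 1) * (1 - v i))) ^ m *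
          ((Fintype.card ι : ℝ)⁻¹ * ∑ i, L ((∑ j, Q i j ^ 2) ^ (m + 1) * (1 - v i))) := by ring
    _ ≤ (ε * L (h ^ (m + 1))) ^ m *
          ((Fintype.card ι : ℝ)⁻¹ * ∑ i, L ((∑ j, Q i j ^ 2) ^ (m + 1))) := by
        refine mul_le_mul (pow_le_pow_left₀ hh_nonneg haverage_le m) ?_
          (haverage_nonneg hsq hsqd) (pow_nonneg (hh_nonneg.trans haverage_le) m)
        gcongr with i
        exact hs.map_mul_one_sub_le (isSumSq_pow (hsq i) _)
          (totalDegree_pow_le_of_le (hsqd i) _) i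
    _ = _ := by simp only [empiricalMoment, map_smul, map_sum, smul_eq_mul]

theorem empiricalMoment_one_map_le (hs : IsPseudoSelection L m ε v Q F) (hε : 0 ≤ ε) {K c : ℝ}
    (hK : 0 ≤ K) (p : ι → κ → ℝ)
    (hhyper : IsSumSq (K • empiricalMoment 1 (fun i j => Q i j - C (p i j)) ^ (m + 1) -
      empiricalMoment (m + 1) fun i j => Q i j - C (p i j)))
    (hF : L (empiricalMoment 1 F ^ (m + 1)) ≤ empiricalMoment 1 p ^ (m + 1))
    (hc : c = ε ^ m * K * 2 ^ (m + 1) * 2 ^ (4 * (m + 1))) (hc1 : c < 1) :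
    empiricalMoment 1 (fun i j => L (Q i j)) ≤
      (1 + (c / (1 - c)) ^ ((m + 1 : ℕ) : ℝ)⁻¹) * empiricalMoment 1 p +
        (ε ^ m * (2 ^ (2 * (m + 1)) + K * 2 ^ (4 * (m + 1))) / (1 - c)) ^ ((m + 1 : ℕ) : ℝ)⁻¹ *
          empiricalMoment (m + 1) p ^ ((m + 1 : ℕ) : ℝ)⁻¹ := by
  have hpos := hs.positiveUpTo
  have hQ := isSumSq_empiricalMoment 1 Q
  have hQd := totalDegree_empiricalMoment_le hs.totalDegree_left_le 1
  have hFd := totalDegree_empiricalMoment_le hs.totalDegree_right_le 1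
  have hsplit := hs.map_mul_empiricalMoment_one_le (isSumSq_pow hQ m)
    (totalDegree_pow_le_of_le hQd m)
  rw [← pow_succ] at hsplit
  have hQpow : (empiricalMoment 1 Q ^ (m + 1)).totalDegree ≤ 2 * (m + 1) :=
    totalDegree_pow_le_of_le hQd (m + 1)
  have hE : 0 ≤ L (empiricalMoment 1 Q ^ (m + 1)) :=
    hpos (isSumSq_pow hQ _) (hQpow.trans (by omega))
  have hR : 0 ≤ L (empiricalMoment (m + 1) Q) := hpos (isSumSq_empiricalMoment _ _)
    ((totalDegree_empiricalMoment_le hs.totalDegree_left_le _).trans (by omega))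
  have hselected := (hpos.map_pow_mul_pow_le hQ (isSumSq_empiricalMoment 1 F)
    (hQd.trans (by omega)) hFd).trans (mul_le_mul_of_nonneg_left hF (pow_nonneg hE m))
  have hjensen := (hpos.mono (by omega : 2 * (m + 1) ≤ _)).map_pow_le hs.map_one hQ hQd
  refine ((hpos.mono (by omega)).empiricalMoment_one_map_le hs.map_one
    hs.totalDegree_left_le).trans ?_
  exact le_rpow_of_self_bounded hε hK hE (empiricalMoment_nonneg _ _)
    (empiricalMoment_nonneg _ _) hR hjensen hsplit hselected
    (hs.average_map_mul_one_sub_pow_le hQ hQd)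
    ((hpos.mono (by omega)).map_empiricalMoment_le hs.map_one hs.totalDegree_left_le hK p hhyper)
    hc hc1

end IsPseudoSelection

end PseudoSelection

section Residual

variable {ι κ δ R : Type*} [Fintype δ] [CommRing R]

/-- The residual `yᵢ - Aᵢᵀ x` of the `i`-th measurement. The coefficient ring is kept general so
that the measurements and `x` may be numbers or indeterminates. -/
def measurementResidual (y : ι → κ → R) (A : ι → Matrix δ κ R) (x : δ → R) (i : ι) (j : κ) : R :=
  y i j - ∑ k, A i k j * x k

theorem totalDegree_measurementResidual_le {V : Type*} {y : ι → κ → MvPolynomial V R}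
    {A : ι → Matrix δ κ (MvPolynomial V R)} {x : δ → MvPolynomial V R} {a b : ℕ}
    (hy : ∀ i j, (y i j).totalDegree ≤ a + b) (hA : ∀ i k j, (A i k j).totalDegree ≤ a)
    (hx : ∀ k, (x k).totalDegree ≤ b) (i : ι) (j : κ) :
    (measurementResidual y A x i j).totalDegree ≤ a + b :=
  totalDegree_sub_le_of_le (hy i j) <| totalDegree_finsetSum_le fun k _ =>
    totalDegree_mul_le_of_le (hA i k j) (hx k)

/-- The residual `yᵢ - Aᵢᵀ x` with numerical `y` and `A`, as a polynomial expression in `x`. -/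
def affineResidual {V : Type*} (y : ι → κ → ℝ) (A : ι → Matrix δ κ ℝ)
    (x : δ → MvPolynomial V ℝ) : ι → κ → MvPolynomial V ℝ :=
  measurementResidual (fun i j => C (y i j)) (fun i => (A i).map C) x

variable {V : Type*} (y : ι → κ → ℝ) (A : ι → Matrix δ κ ℝ) (x : δ → MvPolynomial V ℝ)

theorem totalDegree_affineResidual_le {x : δ → MvPolynomial V ℝ} {d : ℕ}
    (hx : ∀ k, (x k).totalDegree ≤ d) (i : ι) (j : κ) :
    (affineResidual y A x i j).totalDegree ≤ d :=
  (totalDegree_measurementResidual_le (a := 0) (by simp) (by simp) hx i j).trans_eq (zero_add d)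

theorem map_affineResidual {L : MvPolynomial V ℝ →ₗ[ℝ] ℝ} (hone : L 1 = 1) (i : ι) (j : κ) :
    L (affineResidual y A x i j) = measurementResidual y A (fun k => L (x k)) i j := by
  simp only [affineResidual, measurementResidual, Matrix.map_apply, map_sub, map_sum,
    C_eq_smul_one, smul_mul_assoc, one_mul, map_smul, smul_eq_mul, hone, mul_one]

theorem affineResidual_sub_C_measurementResidual (x₀ : δ → ℝ) (i : ι) (j : κ) :
    affineResidual y A x i j - C (measurementResidual y A x₀ i j) =
      -∑ k, C (A i k j) * (x k - C (x₀ k)) := by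
  simp only [affineResidual, measurementResidual, Matrix.map_apply, map_sub, map_sum, C_mul,
    mul_sub, Finset.sum_sub_distrib]
  ring

end Residual

theorem isSOS_iff_isSumSq {V : Type*} {p : MvPolynomial V ℝ} : IsSOS p ↔ IsSumSq p := by
  constructor
  · rintro ⟨N, q, rfl⟩
    exact IsSumSq.sum_sq _ _
  · intro hp
    induction hp with
    | zero => exact ⟨0, 0, by simp⟩
    | sq_add a _ ih =>
      obtain ⟨N, q, rfl⟩ := ih
      exact ⟨N + 1, Fin.cons a q, by simp [Fin.sum_univ_succ, sq]⟩

section Hypercontractivity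

variable {n dx dy : ℕ}

theorem Hypercontractive.isSumSq_affineResidual {A : Fin n → Matrix (Fin dx) (Fin dy) ℝ} {k : ℕ}
    {Cf : ℕ → ℝ} (hA : Hypercontractive A k Cf) {V : Type*} (y : Fin n → Fin dy → ℝ)
    (x : Fin dx → MvPolynomial V ℝ) (x₀ : Fin dx → ℝ) {t : ℕ} (ht : 1 ≤ t) (htk : t ≤ k / 2) :
    IsSumSq (Cf t ^ t • empiricalMoment 1
        (fun i j => affineResidual y A x i j - C (measurementResidual y A x₀ i j)) ^ t -
      empiricalMoment t
        fun i j => affineResidual y A x i j - C (measurementResidual y A x₀ i j)) := by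
  -- Substitute `x - x₀` for the indeterminate vector of the hypercontractivity certificate.
  let φ := aeval (R := ℝ) fun k => x k - C (x₀ k)
  have hnorm (i : Fin n) : φ (normAPoly A i) =
      ∑ j, (affineResidual y A x i j - C (measurementResidual y A x₀ i j)) ^ 2 := by
    simp only [φ, normAPoly, map_sum, map_pow, map_mul, algHom_C, algebraMap_eq, aeval_X,
      affineResidual_sub_C_measurementResidual, neg_sq]
  have hsos := isSumSq_map φ.toRingHom (isSOS_iff_isSumSq.1 (hA t ht htk))
  simpa only [empiricalMoment, Fintype.card_fin, pow_one, smul_eq_C_mul, ← hnorm, map_sub,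
    map_mul, map_pow, map_sum, algHom_C, algebraMap_eq, AlgHom.toRingHom_eq_coe,
    RingHom.coe_coe] using hsos

end Hypercontractivity

section PseudoExpectation

variable {V ι : Type*}

/-- The pseudo-expectation of polynomials as a linear functional. -/
def pExpectₗ (μ : (V → ℝ) →₀ ℝ) : MvPolynomial V ℝ →ₗ[ℝ] ℝ where
  toFun p := pExpect μ fun z => eval z p
  map_add' p q := by simp only [pExpect, map_add, mul_add, Finset.sum_add_distrib]
  map_smul' c p := by
    simp only [pExpect, smul_eval, mul_left_comm _ c, Finset.mul_sum, RingHom.id_apply,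
      smul_eq_mul]

theorem pExpectₗ_apply (μ : (V → ℝ) →₀ ℝ) (p : MvPolynomial V ℝ) :
    pExpectₗ μ p = pExpect μ fun z => eval z p :=
  rfl

theorem IsPseudoDist.pExpectₗ_one {μ : (V → ℝ) →₀ ℝ} {ℓ : ℕ} (hμ : IsPseudoDist μ ℓ) :
    pExpectₗ μ 1 = 1 := by
  simpa only [pExpectₗ_apply, pExpect, map_one, mul_one] using hμ.1

theorem pExpect_single (z : V → ℝ) (f : (V → ℝ) → ℝ) :
    pExpect (Finsupp.single z 1) f = f z := by
  simp [pExpect, Finsupp.support_single]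

theorem isPseudoDist_single (z : V → ℝ) (ℓ : ℕ) : IsPseudoDist (Finsupp.single z 1) ℓ := by
  refine ⟨by simp [Finsupp.support_single], fun p _ => ?_⟩
  rw [pExpect_single]
  positivity

variable [Fintype ι] [DecidableEq ι] {A : ι → MvPolynomial V ℝ}

theorem pdSatisfies_single {z : V → ℝ} (hz : ∀ i, 0 ≤ eval z (A i)) (ℓ k : ℕ) :
    PDSatisfies (Finsupp.single z 1) ℓ A k := fun S h hh _ => by
  rw [pExpect_single, map_mul, map_prod]
  exact mul_nonneg (isSumSq_map (eval z) (isSOS_iff_isSumSq.1 hh)).nonneg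
    (Finset.prod_nonneg fun i _ => hz i)

namespace PDSatisfies

variable {μ : (V → ℝ) →₀ ℝ} {ℓ k d : ℕ}

theorem positiveUpTo (hsat : PDSatisfies μ ℓ A k) : PositiveUpTo (pExpectₗ μ) ℓ :=
  fun h hh hhd => by
    simpa [pExpectₗ_apply] using hsat ∅ h (isSOS_iff_isSumSq.2 hh) (by simpa using hhd)

theorem pExpectₗ_mul_nonneg (hsat : PDSatisfies μ ℓ A k) {a : ι} (ha : (A a).totalDegree ≤ k)
    {h : MvPolynomial V ℝ} (hh : IsSumSq h) (hhd : h.totalDegree + k ≤ ℓ) :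
    0 ≤ pExpectₗ μ (h * A a) := by
  simpa [pExpectₗ_apply] using
    hsat {a} h (isSOS_iff_isSumSq.2 hh) (by simpa [max_eq_right ha] using hhd)

theorem vanishesUpTo (hsat : PDSatisfies μ ℓ A k) {a b : ι} {f : MvPolynomial V ℝ}
    (ha : A a = f) (hb : A b = -f) (hf : f.totalDegree ≤ k) (hd : 2 * d + k ≤ ℓ) :
    VanishesUpTo (pExpectₗ μ) (2 * d) f := vanishesUpTo_of_isSumSq fun h hh hhd => by
  have hge := hsat.pExpectₗ_mul_nonneg (a := a) (ha ▸ hf) hh (by omega)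
  have hle := hsat.pExpectₗ_mul_nonneg (a := b) (by rwa [hb, totalDegree_neg]) hh (by omega)
  rw [ha] at hge
  rw [hb, mul_neg, map_neg] at hle
  linarith

end PDSatisfies

end PseudoExpectation

theorem le_sum_of_le_of_sum_eq {ι : Type*} [Fintype ι] {a : ι → ℝ} {s β : ℝ} (hs : 0 ≤ s)
    (ha : ∀ i, a i ≤ s) (hsum : ∑ i, a i = (1 - β) * Fintype.card ι * s) {G : Finset ι}
    (hG : (1 - β) * Fintype.card ι ≤ G.card) :
    (1 - 2 * β) * Fintype.card ι * s ≤ ∑ i ∈ G, a i := by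
  classical
  have hsplit : ∑ i ∈ G, a i + ∑ i ∈ Gᶜ, a i = ∑ i, a i := Finset.sum_add_sum_compl G a
  have hcompl : ∑ i ∈ Gᶜ, a i ≤ (Gᶜ.card : ℝ) * s := by
    simpa only [nsmul_eq_mul] using Finset.sum_le_card_nsmul Gᶜ a s fun i _ => ha i
  have hcard : (G.card : ℝ) + Gᶜ.card = Fintype.card ι := by
    exact_mod_cast Finset.card_add_card_compl G
  nlinarith

theorem average_map_mul_one_sub_ite_le {ι V : Type*} [Fintype ι] [Nonempty ι] [DecidableEq ι]
    {L : MvPolynomial V ℝ →ₗ[ℝ] ℝ} {d : ℕ} {w : ι → MvPolynomial V ℝ} {β : ℝ} {G : Finset ι}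
    (hL : PositiveUpTo L (d + 2)) (hdeg : ∀ i, (w i).totalDegree ≤ 1)
    (hidem : ∀ i, VanishesUpTo L d (w i ^ 2 - w i))
    (hsum : VanishesUpTo L d (∑ i, w i - C ((1 - β) * Fintype.card ι)))
    (hG : (1 - β) * Fintype.card ι ≤ G.card) {h : MvPolynomial V ℝ} (hh : IsSumSq h)
    (hhd : h.totalDegree ≤ d) :
    (Fintype.card ι : ℝ)⁻¹ * ∑ i, L (h * (1 - if i ∈ G then w i else 0)) ≤ 2 * β * L h := by
  have hmap_le (i) : L (h * w i) ≤ L h := by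
    have := hL.comp_mulRight_one_sub (hdeg i) (hidem i) hh hhd
    rwa [LinearMap.comp_apply, LinearMap.mulRight_apply, mul_sub, mul_one, map_sub,
      sub_nonneg] at this
  have hmap_sum : ∑ i, L (h * w i) = (1 - β) * Fintype.card ι * L h := by
    have := hsum hhd
    rwa [mul_sub, Finset.mul_sum, map_sub, map_sum, mul_comm h (C _), ← smul_eq_C_mul, map_smul,
      smul_eq_mul, sub_eq_zero] at this
  have hmissing : ∑ i, L (h * (1 - if i ∈ G then w i else 0)) =
      Fintype.card ι * L h - ∑ i ∈ G, L (h * w i) := by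
    simp only [mul_sub, mul_one, mul_ite, mul_zero, map_sub, apply_ite L, map_zero,
      Finset.sum_sub_distrib, Finset.sum_const, Finset.card_univ, nsmul_eq_mul,
      Finset.sum_ite_mem, Finset.univ_inter]
  have hselected := le_sum_of_le_of_sum_eq (hL hh (by omega)) hmap_le hmap_sum hG
  rw [hmissing, inv_mul_le_iff₀ (by exact_mod_cast Fintype.card_pos)]
  linarith

section Program

variable {n dx dy mX : ℕ}

/-- The residual `ȳᵢ - Āᵢᵀ x` of the measurements that are indeterminates of the program. -/
def programResidual : Fin n → Fin dy → MvPolynomial (V3 n dx dy) ℝ :=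
  measurementResidual Xy3 (fun i => Matrix.of (XA3 i)) Xx3

theorem totalDegree_Xw_le (i : Fin n) :
    (Xw i : MvPolynomial (V3 n dx dy) ℝ).totalDegree ≤ 1 :=
  (totalDegree_X _).le

theorem totalDegree_Xx3_le (k : Fin dx) :
    (Xx3 k : MvPolynomial (V3 n dx dy) ℝ).totalDegree ≤ 1 :=
  (totalDegree_X _).le

theorem totalDegree_Xy3_le (i : Fin n) (j : Fin dy) :
    (Xy3 i j : MvPolynomial (V3 n dx dy) ℝ).totalDegree ≤ 1 :=
  (totalDegree_X _).le

theorem totalDegree_XA3_le (i : Fin n) (k : Fin dx) (j : Fin dy) :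
    (XA3 i k j : MvPolynomial (V3 n dx dy) ℝ).totalDegree ≤ 1 :=
  (totalDegree_X _).le

theorem totalDegree_programResidual_le (i : Fin n) (j : Fin dy) :
    (programResidual i j : MvPolynomial (V3 n dx dy) ℝ).totalDegree ≤ 2 :=
  totalDegree_measurementResidual_le (a := 1) (b := 1)
    (fun i j => (totalDegree_Xy3_le i j).trans one_le_two) totalDegree_XA3_le totalDegree_Xx3_le i j

theorem objLTS1_eq (k : ℕ) :
    objLTS1 n dx dy k = empiricalMoment 1 programResidual ^ (k / 2) := by
  simp only [objLTS1, empiricalMoment, programResidual, measurementResidual, Matrix.of_apply,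
    Fintype.card_fin, pow_one, smul_eq_C_mul]

theorem errF_eq (y : Fin n → Fin dy → ℝ) (A : Fin n → Matrix (Fin dx) (Fin dy) ℝ)
    (x : Fin dx → ℝ) : errF y A x = empiricalMoment 1 (measurementResidual y A x) := by
  simp only [errF, empiricalMoment, measurementResidual, Fintype.card_fin, pow_one, smul_eq_mul]

/-- The assignment of the program variables that selects the indices in `S`, estimates `x` and
takes the measurements to be `(y, A)`. -/
def selectionPoint (S : Finset (Fin n)) (y : Fin n → Fin dy → ℝ)
    (A : Fin n → Matrix (Fin dx) (Fin dy) ℝ) (x : Fin dx → ℝ) : V3 n dx dy → ℝ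
  | .inl i => if i ∈ S then 1 else 0
  | .inr (.inl k) => x k
  | .inr (.inr (.inl (i, j))) => y i j
  | .inr (.inr (.inr (i, k, j))) => A i k j

variable {y y0 : Fin n → Fin dy → ℝ} {A A0 : Fin n → Matrix (Fin dx) (Fin dy) ℝ}
  {g : Fin mX → MvPolynomial (Fin dx) ℝ} {x : Fin dx → ℝ} {G : Finset (Fin n)} {β : ℝ}

theorem eval_selectionPoint_objLTS1 (S : Finset (Fin n)) (y : Fin n → Fin dy → ℝ)
    (A : Fin n → Matrix (Fin dx) (Fin dy) ℝ) (x : Fin dx → ℝ) (k : ℕ) :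
    eval (selectionPoint S y A x) (objLTS1 n dx dy k) = errF y A x ^ (k / 2) := by
  simp only [objLTS1, errF, Xx3, Xy3, XA3, selectionPoint, map_pow, map_mul, map_sum, map_sub,
    eval_C, eval_X]

theorem eval_selectionPoint_sysL_nonneg {S : Finset (Fin n)} {α : ℝ} (hS : (S.card : ℝ) = α * n)
    (hy : ∀ i ∈ S, ∀ j, y i j = y0 i j) (hA : ∀ i ∈ S, A i = A0 i)
    (hx : ∀ j, 0 ≤ eval x (g j)) (c) :
    0 ≤ eval (selectionPoint S y0 A0 x) (sysL y A g α c) := by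
  set z := selectionPoint S y0 A0 x with hz
  have hw (i) : eval z (Xw i) = if i ∈ S then 1 else 0 := by
    simp only [Xw, eval_X, hz, selectionPoint]
  have hsum : eval z (∑ i, Xw i) = α * n := by simp [hw, ← hS]
  have hymul (i j) : eval z (Xw i * (Xy3 i j - C (y i j))) = 0 := by
    by_cases hi : i ∈ S
    · simp [Xy3, hz, selectionPoint, hy i hi]
    · simp [hw, hi]
  have hAmul (i k j) : eval z (Xw i * (XA3 i k j - C (A i k j))) = 0 := by
    by_cases hi : i ∈ S
    · simp [XA3, hz, selectionPoint, hA i hi]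
    · simp [hw, hi]
  rcases c with i | i | c | ⟨i, j⟩ | ⟨i, j⟩ | ⟨i, k, j⟩ | ⟨i, k, j⟩ | j <;> simp only [sysL]
  · by_cases hi : i ∈ S <;> simp [hw, hi]
  · by_cases hi : i ∈ S <;> simp [hw, hi]
  · split_ifs <;> rw [map_sub, hsum, eval_C, sub_self]
  · exact (hymul i j).ge
  · rw [map_neg, hymul, neg_zero]
  · exact (hAmul i k j).ge
  · rw [map_neg, hAmul, neg_zero]
  · rw [eval_rename]
    exact hx j

theorem exists_subset_card_eq_one_sub_mul (hβ1 : β < 1) (hβint : ∃ m : ℕ, (m : ℝ) = β * n)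
    (hG : (1 - β) * n ≤ G.card) : ∃ S ⊆ G, (S.card : ℝ) = (1 - β) * n := by
  obtain ⟨m, hm⟩ := hβint
  have hmn : m ≤ n := by
    have : (m : ℝ) ≤ n := hm.trans_le (mul_le_of_le_one_left n.cast_nonneg hβ1.le)
    exact_mod_cast this
  have hcard : ((n - m : ℕ) : ℝ) = (1 - β) * n := by rw [Nat.cast_sub hmn, hm]; ring
  obtain ⟨S, hSG, hS⟩ := Finset.exists_subset_card_eq (s := G) (n := n - m) (by
    rw [← hcard] at hG
    exact_mod_cast hG)
  exact ⟨S, hSG, by rw [hS, hcard]⟩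

variable {μ : (V3 n dx dy → ℝ) →₀ ℝ} {ℓ k : ℕ}

theorem pExpect_objLTS1_le_of_isMin (hβ1 : β < 1) (hβint : ∃ m : ℕ, (m : ℝ) = β * n)
    (hGcard : (1 - β) * n ≤ G.card) (hG : ∀ i ∈ G, (∀ j, y i j = y0 i j) ∧ A i = A0 i)
    (hx : ∀ j, 0 ≤ eval x (g j))
    (hmin : ∀ ν : (V3 n dx dy → ℝ) →₀ ℝ, IsPseudoDist ν ℓ →
      PDSatisfies ν ℓ (sysL y A g (1 - β)) k →
      pExpect μ (fun z => eval z (objLTS1 n dx dy k)) ≤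
        pExpect ν (fun z => eval z (objLTS1 n dx dy k))) :
    pExpect μ (fun z => eval z (objLTS1 n dx dy k)) ≤ errF y0 A0 x ^ (k / 2) := by
  obtain ⟨S, hSG, hS⟩ := exists_subset_card_eq_one_sub_mul hβ1 hβint hGcard
  have hfeasible := eval_selectionPoint_sysL_nonneg hS (fun i hi => (hG i (hSG hi)).1)
    (fun i hi => (hG i (hSG hi)).2) hx
  simpa only [pExpect_single, eval_selectionPoint_objLTS1] using
    hmin _ (isPseudoDist_single _ ℓ) (pdSatisfies_single hfeasible ℓ k)

section Constraints

variable {α : ℝ} {d : ℕ}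

theorem vanishesUpTo_Xw_sq_sub (hsat : PDSatisfies μ ℓ (sysL y A g α) k) (hk : 2 ≤ k)
    (hd : 2 * d + k ≤ ℓ) (i : Fin n) : VanishesUpTo (pExpectₗ μ) (2 * d) (Xw i ^ 2 - Xw i) :=
  hsat.vanishesUpTo (a := .inr (.inl i)) (b := .inl i) rfl (neg_sub _ _).symm
    (totalDegree_sub_le_of_le ((totalDegree_pow_le_of_le (totalDegree_Xw_le i) 2).trans hk)
      ((totalDegree_Xw_le i).trans (by omega))) hd

theorem vanishesUpTo_sum_Xw_sub (hsat : PDSatisfies μ ℓ (sysL y A g α) k) (hk : 1 ≤ k)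
    (hd : 2 * d + k ≤ ℓ) :
    VanishesUpTo (pExpectₗ μ) (2 * d) (∑ i, Xw i - C (α * n)) :=
  hsat.vanishesUpTo (a := .inr (.inr (.inl 1))) (b := .inr (.inr (.inl 0)))
    (by simp [sysL]) (by simp [sysL])
    (totalDegree_sub_le_of_le
      (totalDegree_finsetSum_le fun i _ => (totalDegree_Xw_le i).trans hk)
      ((totalDegree_C _).trans_le k.zero_le)) hd

theorem totalDegree_Xw_mul_sub_C_le {p : MvPolynomial (V3 n dx dy) ℝ} (hp : p.totalDegree ≤ 1)
    (i : Fin n) (c : ℝ) : (Xw i * (p - C c)).totalDegree ≤ 2 :=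
  totalDegree_mul_le_of_le (totalDegree_Xw_le i) (totalDegree_sub_le_of_le hp (by simp))

theorem vanishesUpTo_Xw_mul_Xy3_sub (hsat : PDSatisfies μ ℓ (sysL y A g α) k) (hk : 2 ≤ k)
    (hd : 2 * d + k ≤ ℓ) (i : Fin n) (j : Fin dy) :
    VanishesUpTo (pExpectₗ μ) (2 * d) (Xw i * (Xy3 i j - C (y i j))) :=
  hsat.vanishesUpTo (a := .inr (.inr (.inr (.inl (i, j)))))
    (b := .inr (.inr (.inr (.inr (.inl (i, j)))))) rfl rfl
    ((totalDegree_Xw_mul_sub_C_le (totalDegree_Xy3_le i j) i _).trans hk) hd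

theorem vanishesUpTo_Xw_mul_XA3_sub (hsat : PDSatisfies μ ℓ (sysL y A g α) k) (hk : 2 ≤ k)
    (hd : 2 * d + k ≤ ℓ) (i : Fin n) (c : Fin dx) (j : Fin dy) :
    VanishesUpTo (pExpectₗ μ) (2 * d) (Xw i * (XA3 i c j - C (A i c j))) :=
  hsat.vanishesUpTo (a := .inr (.inr (.inr (.inr (.inr (.inl (i, c, j)))))))
    (b := .inr (.inr (.inr (.inr (.inr (.inr (.inl (i, c, j)))))))) rfl rfl
    ((totalDegree_Xw_mul_sub_C_le (totalDegree_XA3_le i c j) i _).trans hk) hd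

theorem vanishesUpTo_Xw_mul_programResidual_sub (hsat : PDSatisfies μ ℓ (sysL y A g α) k)
    (hk : 2 ≤ k) (hd : 2 * (d + 1) + k ≤ ℓ) (i : Fin n) (j : Fin dy) :
    VanishesUpTo (pExpectₗ μ) (2 * d + 1)
      (Xw i * (programResidual i j - affineResidual y A Xx3 i j)) := by
  have hexpand : Xw i * (programResidual i j - affineResidual y A Xx3 i j) =
      Xw i * (Xy3 i j - C (y i j)) - ∑ c, Xx3 c * (Xw i * (XA3 i c j - C (A i c j))) := by
    simp only [programResidual, affineResidual, measurementResidual, Matrix.of_apply,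
      Matrix.map_apply, mul_sub, Finset.mul_sum, Finset.sum_sub_distrib]
    simp only [mul_comm, mul_left_comm]
    ring
  rw [hexpand]
  exact ((vanishesUpTo_Xw_mul_Xy3_sub hsat hk hd i j).mono (by omega)).sub <|
    VanishesUpTo.sum fun c _ =>
      ((vanishesUpTo_Xw_mul_XA3_sub hsat hk hd i c j).mono (by omega)).mul_left
        (totalDegree_Xx3_le c)

end Constraints

theorem isPseudoSelection_of_pdSatisfies {m : ℕ} (hn : 0 < n) (hGcard : (1 - β) * n ≤ G.card)
    (hG : ∀ i ∈ G, (∀ j, y i j = y0 i j) ∧ A i = A0 i) (hℓ : 4 * (m + 1) ≤ ℓ)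
    (hpd : IsPseudoDist μ ℓ) (hsat : PDSatisfies μ ℓ (sysL y A g (1 - β)) (2 * (m + 1))) :
    IsPseudoSelection (pExpectₗ μ) m (2 * β) (fun i => if i ∈ G then Xw i else 0)
      (affineResidual y0 A0 Xx3) programResidual where
  map_one := hpd.pExpectₗ_one
  positiveUpTo := hsat.positiveUpTo.mono hℓ
  totalDegree_indicator_le i := by
    split_ifs
    · exact totalDegree_Xw_le i
    · simp
  totalDegree_left_le := totalDegree_affineResidual_le y0 A0 totalDegree_Xx3_le
  totalDegree_right_le := totalDegree_programResidual_le
  vanishesUpTo_idempotent i := by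
    split_ifs
    · exact vanishesUpTo_Xw_sq_sub hsat (by omega) (by omega) i
    · simp [VanishesUpTo]
  vanishesUpTo_mul_sub i j := by
    split_ifs with hi
    · have hclean : affineResidual y0 A0 Xx3 i j =
          (affineResidual y A Xx3 i j : MvPolynomial (V3 n dx dy) ℝ) := by
        simp only [affineResidual, measurementResidual, (hG i hi).1, (hG i hi).2]
      rw [hclean]
      exact vanishesUpTo_Xw_mul_programResidual_sub hsat (by omega) (by omega) i j
    · simp [VanishesUpTo]
  average_map_mul_one_sub_le h hh hhd := by
    have : Nonempty (Fin n) := Fin.pos_iff_nonempty.1 hn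
    refine average_map_mul_one_sub_ite_le (hsat.positiveUpTo.mono (by omega)) totalDegree_Xw_le
      (vanishesUpTo_Xw_sq_sub hsat (by omega) (by omega)) ?_ ?_ hh hhd
    · simpa only [Fintype.card_fin] using vanishesUpTo_sum_Xw_sub hsat (by omega) (by omega)
    · simpa only [Fintype.card_fin] using hGcard

end Program

theorem lts1_hypercontractive_contract_general {n dx dy mX : ℕ} (hn : 0 < n)
    (y0 : Fin n → Fin dy → ℝ) (A0 : Fin n → Matrix (Fin dx) (Fin dy) ℝ)
    (y : Fin n → Fin dy → ℝ) (A : Fin n → Matrix (Fin dx) (Fin dy) ℝ)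
    (β : ℝ) (hβ0 : 0 ≤ β) (hβ1 : β < 1) (hβint : ∃ m : ℕ, (m : ℝ) = β * n)
    (G : Finset (Fin n)) (hGcard : (1 - β) * n ≤ G.card)
    (hG : ∀ i ∈ G, (∀ j, y i j = y0 i j) ∧ A i = A0 i)
    (g : Fin mX → MvPolynomial (Fin dx) ℝ) (x : Fin dx → ℝ) (hx : ∀ j, 0 ≤ eval x (g j))
    (Cf : ℕ → ℝ) (hCf : ∀ t, 0 ≤ Cf t) (k : ℕ) (hk : 0 < k) (hke : Even k)
    (hhyper : Hypercontractive A0 k Cf) (ck C1 C2 : ℝ)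
    (hck : ck = (2 * β) ^ (k / 2 - 1) * Cf (k / 2) ^ (k / 2) * 2 ^ (k / 2) * 2 ^ (2 * k))
    (hcklt : ck < 1) (hC1 : C1 = ck / (1 - ck))
    (hC2 : C2 = (2 * β) ^ (k / 2 - 1) *
      ((2 : ℝ) ^ k + Cf (k / 2) ^ (k / 2) * 2 ^ (2 * k)) / (1 - ck))
    (r : ℕ) (hr : k ≤ r) (μ : (V3 n dx dy → ℝ) →₀ ℝ) (hpd : IsPseudoDist μ (2 * r))
    (hsat : PDSatisfies μ (2 * r) (sysL y A g (1 - β)) k)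
    (hmin : ∀ ν : (V3 n dx dy → ℝ) →₀ ℝ, IsPseudoDist ν (2 * r) →
      PDSatisfies ν (2 * r) (sysL y A g (1 - β)) k →
      pExpect μ (fun z => eval z (objLTS1 n dx dy k)) ≤
        pExpect ν (fun z => eval z (objLTS1 n dx dy k))) :
    errF y0 A0 (fun k' => pExpect μ fun z => z (Sum.inr (Sum.inl k'))) ≤
      (1 + C1 ^ ((2 : ℝ) / k)) * errF y0 A0 x +
        C2 ^ ((2 : ℝ) / k) *
          ((n : ℝ)⁻¹ * ∑ i, (∑ j, (y0 i j - ∑ k', A0 i k' j * x k') ^ 2) ^ (k / 2)) ^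
            ((2 : ℝ) / k) := by
  obtain ⟨m, rfl⟩ : ∃ m, k = 2 * (m + 1) := ⟨k / 2 - 1, by grind⟩
  have hhalf : 2 * (m + 1) / 2 = m + 1 := by omega
  have hexp : (2 : ℝ) / (2 * (m + 1) : ℕ) = ((m + 1 : ℕ) : ℝ)⁻¹ := by push_cast; field_simp
  have hfour : 2 * (2 * (m + 1)) = 4 * (m + 1) := by ring
  have hobj := pExpect_objLTS1_le_of_isMin hβ1 hβint hGcard hG hx hmin
  rw [← pExpectₗ_apply, objLTS1_eq, errF_eq, hhalf] at hobj
  simp only [hhalf, hfour, Nat.add_sub_cancel] at hck hC2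
  have hbound := (isPseudoSelection_of_pdSatisfies hn hGcard hG (by omega) hpd
    hsat).empiricalMoment_one_map_le (by positivity) (pow_nonneg (hCf _) _)
    (measurementResidual y0 A0 x)
    (hhyper.isSumSq_affineResidual y0 Xx3 x (by omega) (by omega)) hobj hck hcklt
  simpa only [map_affineResidual y0 A0 _ hpd.pExpectₗ_one, pExpectₗ_apply, Xx3, eval_X, ← hC1,
    ← hC2, ← hexp, errF_eq, hhalf, empiricalMoment, measurementResidual, Fintype.card_fin,
    smul_eq_mul] using hbound

/-- A priori estimation contract for the moment relaxation of (LTS1)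
(Theorem 3, adapted from Klivans et al.): under `k`-certifiable
`C`-hypercontractivity of the uncorrupted measurement matrices and `c_k < 1`
(equivalently `β < β_max`), the pseudo-expectation estimate `x̂ = Ẽ[x]` of an
objective-minimizing level-`2r` pseudo-distribution (`r ≥ k`) satisfying `L` at
degree `k` obeys
`err(x̂) ≤ (1 + C₁^{2/k})·opt + C₂^{2/k}·((1/n)∑_i ‖y°_i − (A°_i)ᵀ x*‖^k)^{2/k}`. -/
theorem lts1_hypercontractive_contract
    {n dx dy mX : ℕ} (hn : 0 < n) (hdx : 0 < dx) (hdy : 0 < dy)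
    (y0 : Fin n → Fin dy → ℝ) (A0 : Fin n → Matrix (Fin dx) (Fin dy) ℝ)
    (y : Fin n → Fin dy → ℝ) (A : Fin n → Matrix (Fin dx) (Fin dy) ℝ)
    (β : ℝ) (hβ0 : 0 ≤ β) (hβ1 : β < 1)
    (hβint : ∃ m : ℕ, (m : ℝ) = β * n)
    (G : Finset (Fin n)) (hGcard : (1 - β) * n ≤ G.card)
    (hG : ∀ i ∈ G, (∀ j, y i j = y0 i j) ∧ A i = A0 i)
    (g : Fin mX → MvPolynomial (Fin dx) ℝ)
    (Mx : ℝ) (hMx : 0 < Mx)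
    (j0 : Fin mX)
    (hj0 : g j0 = C (Mx ^ 2) - ∑ k, (X k : MvPolynomial (Fin dx) ℝ) ^ 2)
    (xstar : Fin dx → ℝ) (hxstar : ∀ j, 0 ≤ MvPolynomial.eval xstar (g j))
    (hxstarmin : ∀ x : Fin dx → ℝ, (∀ j, 0 ≤ MvPolynomial.eval x (g j)) →
      errF y0 A0 xstar ≤ errF y0 A0 x)
    (Cf : ℕ → ℝ) (hCf : ∀ t, 0 ≤ Cf t)
    (k : ℕ) (hk4 : 4 ≤ k) (hke : Even k) (hkpow : ∃ t : ℕ, k / 2 = 2 ^ t)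
    (hhyper : Hypercontractive A0 k Cf)
    (ck C1 C2 : ℝ)
    (hck : ck = (2 * β) ^ (k / 2 - 1) * Cf (k / 2) ^ (k / 2) * 2 ^ (k / 2) * 2 ^ (2 * k))
    (hcklt : ck < 1)
    (hC1 : C1 = ck / (1 - ck))
    (hC2 : C2 = (2 * β) ^ (k / 2 - 1) *
      ((2 : ℝ) ^ k + Cf (k / 2) ^ (k / 2) * 2 ^ (2 * k)) / (1 - ck))
    (r : ℕ) (hr : k ≤ r)
    (μ : (V3 n dx dy → ℝ) →₀ ℝ)
    (hpd : IsPseudoDist μ (2 * r))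
    (hsat : PDSatisfies μ (2 * r) (sysL y A g (1 - β)) k)
    (hmin : ∀ ν : (V3 n dx dy → ℝ) →₀ ℝ, IsPseudoDist ν (2 * r) →
      PDSatisfies ν (2 * r) (sysL y A g (1 - β)) k →
      pExpect μ (fun z => MvPolynomial.eval z (objLTS1 n dx dy k)) ≤
        pExpect ν (fun z => MvPolynomial.eval z (objLTS1 n dx dy k))) :
    errF y0 A0 (fun k' => pExpect μ fun z => z (Sum.inr (Sum.inl k'))) ≤
      (1 + C1 ^ ((2 : ℝ) / k)) * errF y0 A0 xstar +
        C2 ^ ((2 : ℝ) / k) *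
          ((n : ℝ)⁻¹ *
              ∑ i, (∑ j, (y0 i j - ∑ k', A0 i k' j * xstar k') ^ 2) ^ (k / 2)) ^
            ((2 : ℝ) / k) :=
  lts1_hypercontractive_contract_general hn y0 A0 y A β hβ0 hβ1 hβint G hGcard hG g xstar hxstar
    Cf hCf k (by omega) hke hhyper ck C1 C2 hck hcklt hC1 hC2 r hr μ hpd hsat hmin
end
end

section
/- For every real N > 0, the function α ↦ 1 − (1 − α/2)^{N/α} is nondecreasing on the interval (0, 1]. Consequently, for every real α with 0.01 ≤ α ≤ 1 one has 1 − (1 − α/2)^{10/α} ≥ 0.99. -/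
/-!
Bernoulli's inequality `(1 + c y) ^ (x / y) ≤ 1 + c x` for `0 < x ≤ y`, raised to the power `N / x`,
compares the values of `(1 + c x) ^ (N / x)` at `x` and `y`. These values all lie below their limit
`exp (c N)` as `x → 0⁺`; for `c = -1/2` and `N = 10` that limit is `exp (-5) < 0.01`.
-/

theorem antitoneOn_one_add_mul_rpow_div (c : ℝ) {N : ℝ} (hN : 0 ≤ N) :
    AntitoneOn (fun x : ℝ => (1 + c * x) ^ (N / x)) {x | 0 < x ∧ -1 ≤ c * x} := by
  rintro x ⟨hx, -⟩ y ⟨hy, hcy⟩ hxy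
  have base_nonneg : 0 ≤ 1 + c * y := by linarith
  have bernoulli : (1 + c * y) ^ (x / y) ≤ 1 + c * x :=
    calc (1 + c * y) ^ (x / y) ≤ 1 + x / y * (c * y) :=
          rpow_one_add_le_one_add_mul_self hcy (by positivity) ((div_le_one hy).2 hxy)
      _ = 1 + c * x := by field_simp
  calc (1 + c * y) ^ (N / y) = ((1 + c * y) ^ (x / y)) ^ (N / x) := by
        rw [← Real.rpow_mul base_nonneg]
        congr 1
        field_simp
    _ ≤ (1 + c * x) ^ (N / x) := by gcongr

theorem one_add_mul_rpow_div_le_exp {c N x : ℝ} (hN : 0 ≤ N) (hx : 0 < x) (hcx : -1 ≤ c * x) :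
    (1 + c * x) ^ (N / x) ≤ Real.exp (c * N) :=
  calc (1 + c * x) ^ (N / x) ≤ Real.exp (c * x) ^ (N / x) := by
        gcongr
        · linarith
        · linarith [Real.add_one_le_exp (c * x)]
    _ = Real.exp (c * N) := by
        rw [← Real.exp_mul]
        congr 1
        field_simp

theorem exp_neg_five_le_one_hundredth : Real.exp (-5) ≤ 0.01 := by
  have hundred_le : (100 : ℝ) ≤ Real.exp 5 :=
    calc (100 : ℝ) ≤ 2.7 ^ 5 := by norm_num
      _ ≤ Real.exp 1 ^ 5 := by
        gcongr
        linarith [Real.exp_one_gt_d9]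
      _ = Real.exp 5 := by rw [← Real.exp_nat_mul]; norm_num
  calc Real.exp (-5) = (Real.exp 5)⁻¹ := Real.exp_neg 5
    _ ≤ 100⁻¹ := by gcongr
    _ = 0.01 := by norm_num

theorem success_probability_monotone_and_bound_general :
    (∀ N : ℝ, 0 ≤ N →
      MonotoneOn (fun α : ℝ => 1 - (1 - α / 2) ^ (N / α)) (Set.Ioc (0 : ℝ) 2)) ∧
    (∀ α ∈ Set.Ioc (0 : ℝ) 2, (0.99 : ℝ) ≤ 1 - (1 - α / 2) ^ ((10 : ℝ) / α)) := by
  have base_eq (α : ℝ) : 1 - α / 2 = 1 + -1 / 2 * α := by ring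
  have neg_one_le {α : ℝ} (hα : α ≤ 2) : -1 ≤ -1 / 2 * α := by linarith
  simp only [base_eq]
  constructor
  · intro N hN α hα β hβ hαβ
    exact sub_le_sub_left (antitoneOn_one_add_mul_rpow_div (-1 / 2) hN
      ⟨hα.1, neg_one_le hα.2⟩ ⟨hβ.1, neg_one_le hβ.2⟩ hαβ) 1
  · rintro α ⟨hα_pos, hα_le⟩
    have failure_le : (1 + -1 / 2 * α) ^ (10 / α) ≤ (0.01 : ℝ) :=
      calc (1 + -1 / 2 * α) ^ (10 / α) ≤ Real.exp (-1 / 2 * 10) :=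
            one_add_mul_rpow_div_le_exp (by norm_num) hα_pos (neg_one_le hα_le)
        _ = Real.exp (-5) := by norm_num
        _ ≤ 0.01 := exp_neg_five_le_one_hundredth
    linarith

/-- For every real `N > 0`, the function `α ↦ 1 − (1 − α/2)^(N/α)` (real power)
is nondecreasing on `(0, 1]`; consequently, for `0.01 ≤ α ≤ 1` one has
`1 − (1 − α/2)^(10/α) ≥ 0.99`. -/
theorem success_probability_monotone_and_bound :
    (∀ N : ℝ, 0 < N →
      MonotoneOn (fun α : ℝ => 1 - (1 - α / 2) ^ (N / α)) (Set.Ioc (0 : ℝ) 1)) ∧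
    (∀ α : ℝ, (0.01 : ℝ) ≤ α → α ≤ 1 →
      (0.99 : ℝ) ≤ 1 - (1 - α / 2) ^ ((10 : ℝ) / α)) :=
  have ⟨monotone, bound⟩ := success_probability_monotone_and_bound_general
  ⟨fun N hN => (monotone N hN.le).mono (Set.Ioc_subset_Ioc_right one_le_two),
    fun α hα_ge hα_le => bound α ⟨by linarith, by linarith⟩⟩
end

section
/- For every even positive integer k and every n ≥ 1, the polynomial in the 2n indeterminates x₁, x₂ ∈ ℝⁿ given by 2^k·(‖x₁‖²)^{k/2} + 2^k·(‖x₂‖²)^{k/2} − (‖x₁ + x₂‖²)^{k/2} is a sum of squares of polynomials; in other words, the inequality ‖x₁ + x₂‖^k ≤ 2^k·‖x₁‖^k + 2^k·‖x₂‖^k admits a degree-k sum-of-squares proof. -/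
open scoped BigOperators
open MvPolynomial

noncomputable section

/-!
Write `a = ‖x‖²`, `b = ‖y‖²`, `c = ‖x + y‖²` and `d = ‖x - y‖²`. The parallelogram law
`c + d = 2 (a + b)` exhibits `2 ^ m (a + b) ^ m - c ^ m = (c + d) ^ m - c ^ m` as a polynomial in
`c` and `d` with nonnegative coefficients, hence as a sum of squares. The power mean inequality
`(a + b) ^ (m + 1) ≤ 2 ^ m (a ^ (m + 1) + b ^ (m + 1))` also has a sum-of-squares proof, by
induction on `m`, because `(a - b) (a ^ m - b ^ m)` is `(a - b) ^ 2` times a sum of monomials in `a`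
and `b`. Together they give the triangle inequality with constant `2 ^ (k - 1)`.
-/

section Subsemiring

variable {R σ : Type*} [CommRing R] [SetLike σ R] [SubsemiringClass σ R] {S : σ} {a b : R}

theorem add_pow_sub_pow_mem (ha : a ∈ S) (hb : b ∈ S) (m : ℕ) : (a + b) ^ m - a ^ m ∈ S := by
  induction m with
  | zero => simp
  | succ m ih =>
    have step : (a + b) ^ (m + 1) - a ^ (m + 1) =
        ((a + b) ^ m - a ^ m) * (a + b) + a ^ m * b := by ring
    rw [step]
    exact add_mem (mul_mem ih (add_mem ha hb)) (mul_mem (pow_mem ha m) hb)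

theorem sub_mul_pow_sub_pow_mem (ha : a ∈ S) (hb : b ∈ S) (hab : (a - b) ^ 2 ∈ S) (m : ℕ) :
    (a - b) * (a ^ m - b ^ m) ∈ S := by
  have factor : (a - b) * (a ^ m - b ^ m) =
      (a - b) ^ 2 * ∑ i ∈ Finset.range m, a ^ i * b ^ (m - 1 - i) := by
    rw [← (Commute.all a b).mul_geom_sum₂, sq, mul_assoc]
  rw [factor]
  exact mul_mem hab (sum_mem fun i _ => mul_mem (pow_mem ha i) (pow_mem hb _))

theorem two_pow_mul_pow_add_pow_sub_add_pow_mem (ha : a ∈ S) (hb : b ∈ S)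
    (hab : (a - b) ^ 2 ∈ S) (m : ℕ) :
    2 ^ m * (a ^ (m + 1) + b ^ (m + 1)) - (a + b) ^ (m + 1) ∈ S := by
  induction m with
  | zero => simp
  | succ m ih =>
    have step : 2 ^ (m + 1) * (a ^ (m + 2) + b ^ (m + 2)) - (a + b) ^ (m + 2) =
        (2 ^ m * (a ^ (m + 1) + b ^ (m + 1)) - (a + b) ^ (m + 1)) * (a + b) +
          2 ^ m * ((a - b) * (a ^ (m + 1) - b ^ (m + 1))) := by ring
    rw [step]
    exact add_mem (mul_mem ih (add_mem ha hb))
      (mul_mem (pow_mem (ofNat_mem S 2) m) (sub_mul_pow_sub_pow_mem ha hb hab (m + 1)))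

end Subsemiring

theorem sum_add_sq_add_sum_sub_sq {R ι : Type*} [CommRing R] (s : Finset ι) (x y : ι → R) :
    ∑ j ∈ s, (x j + y j) ^ 2 + ∑ j ∈ s, (x j - y j) ^ 2 =
      2 * (∑ j ∈ s, x j ^ 2 + ∑ j ∈ s, y j ^ 2) := by
  simp only [← Finset.sum_add_distrib, Finset.mul_sum]
  exact Finset.sum_congr rfl fun j _ => by ring

theorem sum_sq_mem_sumSq {R ι : Type*} [CommSemiring R] (s : Finset ι) (x : ι → R) :
    ∑ j ∈ s, x j ^ 2 ∈ Subsemiring.sumSq R :=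
  Subsemiring.mem_sumSq.mpr (IsSumSq.sum_sq s x)

theorem sos_triangle_norm_general {R ι : Type*} [CommRing R] (s : Finset ι) (x y : ι → R)
    (m : ℕ) :
    IsSumSq (2 ^ (2 * m + 1) * ((∑ j ∈ s, x j ^ 2) ^ (m + 1) + (∑ j ∈ s, y j ^ 2) ^ (m + 1)) -
      (∑ j ∈ s, (x j + y j) ^ 2) ^ (m + 1)) := by
  have parallelogram := sum_add_sq_add_sum_sub_sq s x y
  have ha := sum_sq_mem_sumSq s x
  have hb := sum_sq_mem_sumSq s y
  have hc := sum_sq_mem_sumSq s fun j => x j + y j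
  have hd := sum_sq_mem_sumSq s fun j => x j - y j
  set a := ∑ j ∈ s, x j ^ 2
  set b := ∑ j ∈ s, y j ^ 2
  set c := ∑ j ∈ s, (x j + y j) ^ 2
  set d := ∑ j ∈ s, (x j - y j) ^ 2
  have hab : (a - b) ^ 2 ∈ Subsemiring.sumSq R :=
    Subsemiring.mem_sumSq.mpr (IsSquare.sq (a - b)).isSumSq
  have power_mean := two_pow_mul_pow_add_pow_sub_add_pow_mem ha hb hab m
  have power_bound : 2 ^ (m + 1) * (a + b) ^ (m + 1) - c ^ (m + 1) ∈ Subsemiring.sumSq R := by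
    simpa only [parallelogram, mul_pow] using add_pow_sub_pow_mem hc hd (m + 1)
  have split : 2 ^ (2 * m + 1) * (a ^ (m + 1) + b ^ (m + 1)) - c ^ (m + 1) =
      2 ^ (m + 1) * (2 ^ m * (a ^ (m + 1) + b ^ (m + 1)) - (a + b) ^ (m + 1)) +
        (2 ^ (m + 1) * (a + b) ^ (m + 1) - c ^ (m + 1)) := by ring
  rw [split, ← Subsemiring.mem_sumSq]
  exact add_mem (mul_mem (pow_mem (ofNat_mem _ 2) _) power_mean) power_bound

theorem isSOS_of_isSumSq {V : Type*} {p : MvPolynomial V ℝ} (hp : IsSumSq p) : IsSOS p := by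
  induction hp with
  | zero => exact ⟨0, Fin.elim0, by simp⟩
  | sq_add a _ ih =>
    obtain ⟨N, q, rfl⟩ := ih
    exact ⟨N + 1, Fin.cons a q, by simp [Fin.sum_univ_succ, sq]⟩

/-- Sos generalized triangle inequality with norms: for even `k > 0`,
`2^k·‖x₁‖^k + 2^k·‖x₂‖^k − ‖x₁ + x₂‖^k` is a sum of squares (in the `2n`
indeterminates `x₁, x₂ ∈ ℝⁿ`, with `‖x‖^k = (‖x‖²)^{k/2}`). -/
theorem sos_triangle_norm (k n : ℕ) (hk : 0 < k) (hke : Even k) (hn : 1 ≤ n) :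
    IsSOS
      (C ((2 : ℝ) ^ k) *
          (∑ j, (X (Sum.inl j) : MvPolynomial (Fin n ⊕ Fin n) ℝ) ^ 2) ^ (k / 2) +
        C ((2 : ℝ) ^ k) *
          (∑ j, (X (Sum.inr j) : MvPolynomial (Fin n ⊕ Fin n) ℝ) ^ 2) ^ (k / 2) -
        (∑ j, ((X (Sum.inl j) : MvPolynomial (Fin n ⊕ Fin n) ℝ) + X (Sum.inr j)) ^ 2) ^
          (k / 2)) := by
  obtain ⟨m, rfl⟩ : ∃ m, k = 2 * (m + 1) := by
    obtain ⟨l, rfl⟩ := hke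
    exact ⟨l - 1, by lia⟩
  -- The general inequality has constant `2 ^ (k - 1)`, which leaves another `2 ^ (k - 1)` to spare.
  have split_slack (a b c : MvPolynomial (Fin n ⊕ Fin n) ℝ) :
      2 ^ (2 * (m + 1)) * a + 2 ^ (2 * (m + 1)) * b - c =
        (2 ^ (2 * m + 1) * (a + b) - c) + 2 ^ (2 * m + 1) * (a + b) := by ring
  rw [Nat.mul_div_cancel_left _ two_pos, map_pow, map_ofNat, split_slack]
  refine isSOS_of_isSumSq ((sos_triangle_norm_general _ _ _ m).add ?_)
  rw [← Subsemiring.mem_sumSq]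
  exact mul_mem (pow_mem (ofNat_mem _ 2) _)
    (add_mem (pow_mem (sum_sq_mem_sumSq _ _) _) (pow_mem (sum_sq_mem_sumSq _ _) _))
end
end

section
/- Let n ≥ 1, let ω ∈ ℝⁿ satisfy ω_i² = ω_i for all i, and let q ∈ ℝ⁴ satisfy ‖q‖² = 1. Let m ∈ ℝ^{5(n+1)} be the vector with entries m[1] := 1, m[ω_i] := ω_i (i = 1,…,n), m[q_a] := q_a (a = 1,…,4), and m[ω_i q_a] := ω_i·q_a, and let X := m·mᵀ, with entries X[u, v] := m[u]·m[v] indexed by these labels. Then X is symmetric positive semidefinite and satisfies the constraints of the sparse order-2 moment relaxation: X[1,1] = 1; X[ω_i, ω_i] = X[ω_i, 1] for all i; X[ω_i q_a, ω_i q_b] = X[q_a, ω_i q_b] for all i, a, b; X[1, ω_i q_a] = X[ω_i, q_a] = X[ω_i, ω_i q_a] for all i, a; X[ω_i q_a, ω_j q_b] = X[ω_j q_b, ω_i q_a] for all i, j, a, b; and ∑_{a=1}^4 X[ω_i q_a, ω_j q_a] = X[ω_i, ω_j] for all i, j. Moreover the relaxation preserves objective and data constraints: ∑_{i=1}^n X[ω_i,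 1]² = ∑_{i=1}^n ω_i²; if ∑_{i=1}^n ω_i = αn then ∑_{i=1}^n X[ω_i, 1] = αn; and if, for given reals r_i and symmetric 4×4 matrices M_i, ω_i·(r_i − 2·qᵀM_i q) ≤ c̄² for all i, then X[ω_i, 1]·r_i − 2·∑_{a,b} (M_i)_{ab}·X[q_a, ω_i q_b] ≤ c̄² for all i. Consequently, the optimal value of the sparse semidefinite relaxation is at most the optimal value of the underlying polynomial optimization problem. -/
open scoped BigOperators
open Matrix

noncomputable section

/-- Labels of the sparse monomial basis `(1, ω₁,…,ω_n, q₁,…,q₄, ω₁q₁,…,ω_nq₄)`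
(a set of cardinality `5(n+1)`). -/
abbrev MomLbl (n : ℕ) : Type := Unit ⊕ Fin n ⊕ Fin 4 ⊕ (Fin n × Fin 4)

def lbl1 {n : ℕ} : MomLbl n := Sum.inl ()
def lblω {n : ℕ} (i : Fin n) : MomLbl n := Sum.inr (Sum.inl i)
def lblq {n : ℕ} (a : Fin 4) : MomLbl n := Sum.inr (Sum.inr (Sum.inl a))
def lblωq {n : ℕ} (i : Fin n) (a : Fin 4) : MomLbl n :=
  Sum.inr (Sum.inr (Sum.inr (i, a)))

/-- The sparse monomial basis vector `m(ω, q)`. -/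
def basisVec {n : ℕ} (ω : Fin n → ℝ) (q : Fin 4 → ℝ) : MomLbl n → ℝ :=
  Sum.elim (fun _ => 1) (Sum.elim ω (Sum.elim q fun p => ω p.1 * q p.2))

/-- Feasibility for the sparse order-2 semidefinite (moment) relaxation. -/
def SDPFeasible (n : ℕ) (α cbar : ℝ) (r : Fin n → ℝ)
    (M : Fin n → Matrix (Fin 4) (Fin 4) ℝ) (Y : Matrix (MomLbl n) (MomLbl n) ℝ) :
    Prop :=
  Y.PosSemidef ∧
  Y lbl1 lbl1 = 1 ∧
  (∀ i, Y (lblω i) (lblω i) = Y (lblω i) lbl1) ∧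
  (∀ i a b, Y (lblωq i a) (lblωq i b) = Y (lblq a) (lblωq i b)) ∧
  (∀ i a, Y lbl1 (lblωq i a) = Y (lblω i) (lblq a)) ∧
  (∀ i a, Y (lblω i) (lblq a) = Y (lblω i) (lblωq i a)) ∧
  (∀ i j a b, Y (lblωq i a) (lblωq j b) = Y (lblωq j b) (lblωq i a)) ∧
  (∀ i j, ∑ a, Y (lblωq i a) (lblωq j a) = Y (lblω i) (lblω j)) ∧
  (∑ a, Y (lblq a) (lblq a)) = 1 ∧
  (∑ i, Y (lblω i) lbl1) = α * n ∧
  ∀ i, Y (lblω i) lbl1 * r i - 2 * ∑ a, ∑ b, M i a b * Y (lblq a) (lblωq i b) ≤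
    cbar ^ 2

/-- Feasibility for the quaternion-based polynomial optimization problem (LDR). -/
def POPFeasible (n : ℕ) (α cbar : ℝ) (r : Fin n → ℝ)
    (M : Fin n → Matrix (Fin 4) (Fin 4) ℝ) (ω : Fin n → ℝ) (q : Fin 4 → ℝ) :
    Prop :=
  (∀ i, ω i ^ 2 = ω i) ∧ (∑ a, q a ^ 2) = 1 ∧ (∑ i, ω i) = α * n ∧
  ∀ i, ω i * (r i - 2 * ∑ a, ∑ b, q a * M i a b * q b) ≤ cbar ^ 2

/-!
On `m·mᵀ` every equality constraint of the relaxation not involving `α` becomes a polynomial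
identity in `(ω, q)` that holds modulo `ω_i² = ω_i` and `‖q‖² = 1`, and the remaining constraints
become those of the polynomial problem. Since the lift also preserves the objective, the relaxation
minimizes over a larger set of values.
-/

/-- The moment matrix `X = m·mᵀ` of the point `(ω, q)`, i.e. the candidate point of the relaxation
obtained by lifting `(ω, q)` along the sparse monomial basis. -/
def momentMatrix {n : ℕ} (ω : Fin n → ℝ) (q : Fin 4 → ℝ) : Matrix (MomLbl n) (MomLbl n) ℝ :=
  vecMulVec (basisVec ω q) (basisVec ω q)

/-- The objective values attained on the feasible set of the semidefinite relaxation; the optimal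
value of the relaxation is the infimum of this set. -/
def sdpValues (n : ℕ) (α cbar : ℝ) (r : Fin n → ℝ) (M : Fin n → Matrix (Fin 4) (Fin 4) ℝ) :
    Set ℝ :=
  {v | ∃ Y, SDPFeasible n α cbar r M Y ∧ v = ∑ i, Y (lblω i) lbl1 ^ 2}

/-- The objective values attained on the feasible set of the polynomial optimization problem; the
optimal value of the problem is the infimum of this set. -/
def popValues (n : ℕ) (α cbar : ℝ) (r : Fin n → ℝ) (M : Fin n → Matrix (Fin 4) (Fin 4) ℝ) :
    Set ℝ :=
  {v | ∃ ω q, POPFeasible n α cbar r M ω q ∧ v = ∑ i, ω i ^ 2}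

theorem sum_mul_mul_mul_self {ι R : Type*} [Fintype ι] [CommSemiring R] (x y : R) (v : ι → R) :
    ∑ a, x * v a * (y * v a) = x * y * ∑ a, v a ^ 2 := by
  rw [Finset.mul_sum]
  exact Finset.sum_congr rfl fun a _ => by ring

theorem sum_sum_mul_mul_mul_left {ι κ R : Type*} [Fintype ι] [Fintype κ] [CommSemiring R]
    (B : Matrix ι κ R) (x : R) (u : ι → R) (v : κ → R) :
    ∑ a, ∑ b, B a b * (u a * (x * v b)) = x * ∑ a, ∑ b, u a * B a b * v b := by
  simp only [Finset.mul_sum]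
  exact Finset.sum_congr rfl fun a _ => Finset.sum_congr rfl fun b _ => by ring

section MomentMatrix

variable {n : ℕ} (ω : Fin n → ℝ) (q : Fin 4 → ℝ)

@[simp]
theorem basisVec_lbl1 : basisVec ω q lbl1 = 1 := rfl

@[simp]
theorem basisVec_lblω (i : Fin n) : basisVec ω q (lblω i) = ω i := rfl

@[simp]
theorem basisVec_lblq (a : Fin 4) : basisVec ω q (lblq a) = q a := rfl

@[simp]
theorem basisVec_lblωq (i : Fin n) (a : Fin 4) : basisVec ω q (lblωq i a) = ω i * q a := rfl

theorem momentMatrix_apply (u v : MomLbl n) :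
    momentMatrix ω q u v = basisVec ω q u * basisVec ω q v := rfl

theorem momentMatrix_comm (u v : MomLbl n) : momentMatrix ω q u v = momentMatrix ω q v u :=
  mul_comm _ _

theorem momentMatrix_transpose : (momentMatrix ω q)ᵀ = momentMatrix ω q :=
  transpose_vecMulVec _ _

theorem momentMatrix_posSemidef : (momentMatrix ω q).PosSemidef := by
  simpa only [momentMatrix, star_trivial] using posSemidef_vecMulVec_self_star (basisVec ω q)

theorem momentMatrix_lbl1_lbl1 : momentMatrix ω q lbl1 lbl1 = 1 := by
  simp [momentMatrix_apply]

theorem momentMatrix_lblω_lbl1 (i : Fin n) : momentMatrix ω q (lblω i) lbl1 = ω i := by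
  simp [momentMatrix_apply]

theorem momentMatrix_lbl1_lblωq (i : Fin n) (a : Fin 4) :
    momentMatrix ω q lbl1 (lblωq i a) = momentMatrix ω q (lblω i) (lblq a) := by
  simp [momentMatrix_apply]

theorem momentMatrix_residual (i : Fin n) (s : ℝ) (B : Matrix (Fin 4) (Fin 4) ℝ) :
    momentMatrix ω q (lblω i) lbl1 * s -
        2 * ∑ a, ∑ b, B a b * momentMatrix ω q (lblq a) (lblωq i b) =
      ω i * (s - 2 * ∑ a, ∑ b, q a * B a b * q b) := by
  simp only [momentMatrix_apply, basisVec_lbl1, basisVec_lblω, basisVec_lblq, basisVec_lblωq,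
    sum_sum_mul_mul_mul_left]
  ring

variable {ω} {i : Fin n}

theorem momentMatrix_lblω_lblω_of_sq_eq_self (hω : ω i ^ 2 = ω i) :
    momentMatrix ω q (lblω i) (lblω i) = momentMatrix ω q (lblω i) lbl1 := by
  simp [momentMatrix_apply, ← sq, hω]

theorem momentMatrix_lblωq_lblωq_of_sq_eq_self (hω : ω i ^ 2 = ω i) (a b : Fin 4) :
    momentMatrix ω q (lblωq i a) (lblωq i b) = momentMatrix ω q (lblq a) (lblωq i b) := by
  simp only [momentMatrix_apply, basisVec_lblq, basisVec_lblωq]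
  linear_combination q a * q b * hω

theorem momentMatrix_lblω_lblq_of_sq_eq_self (hω : ω i ^ 2 = ω i) (a : Fin 4) :
    momentMatrix ω q (lblω i) (lblq a) = momentMatrix ω q (lblω i) (lblωq i a) := by
  simp only [momentMatrix_apply, basisVec_lblω, basisVec_lblq, basisVec_lblωq]
  linear_combination -q a * hω

variable (ω) {q}

theorem sum_momentMatrix_lblq_lblq (hq : ∑ a, q a ^ 2 = 1) :
    ∑ a, momentMatrix ω q (lblq a) (lblq a) = 1 := by
  simpa only [momentMatrix_apply, basisVec_lblq, ← sq] using hq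

theorem sum_momentMatrix_lblωq_lblωq (hq : ∑ a, q a ^ 2 = 1) (i j : Fin n) :
    ∑ a, momentMatrix ω q (lblωq i a) (lblωq j a) = momentMatrix ω q (lblω i) (lblω j) := by
  simp only [momentMatrix_apply, basisVec_lblω, basisVec_lblωq, sum_mul_mul_mul_self, hq, mul_one]

end MomentMatrix

section OptimalValues

variable {n : ℕ} {α cbar : ℝ} {r : Fin n → ℝ} {M : Fin n → Matrix (Fin 4) (Fin 4) ℝ}

theorem POPFeasible.sdpFeasible_momentMatrix {ω : Fin n → ℝ} {q : Fin 4 → ℝ}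
    (h : POPFeasible n α cbar r M ω q) : SDPFeasible n α cbar r M (momentMatrix ω q) := by
  obtain ⟨hω, hq, hsum, hdata⟩ := h
  exact ⟨momentMatrix_posSemidef ω q, momentMatrix_lbl1_lbl1 ω q,
    fun i => momentMatrix_lblω_lblω_of_sq_eq_self q (hω i),
    fun i => momentMatrix_lblωq_lblωq_of_sq_eq_self q (hω i),
    momentMatrix_lbl1_lblωq ω q,
    fun i => momentMatrix_lblω_lblq_of_sq_eq_self q (hω i),
    fun _ _ _ _ => momentMatrix_comm ω q _ _,
    sum_momentMatrix_lblωq_lblωq ω hq,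
    sum_momentMatrix_lblq_lblq ω hq,
    by simpa only [momentMatrix_lblω_lbl1] using hsum,
    fun i => (momentMatrix_residual ω q i (r i) (M i)).trans_le (hdata i)⟩

theorem popValues_subset_sdpValues : popValues n α cbar r M ⊆ sdpValues n α cbar r M := by
  rintro v ⟨ω, q, hfeas, rfl⟩
  exact ⟨momentMatrix ω q, hfeas.sdpFeasible_momentMatrix, by simp only [momentMatrix_lblω_lbl1]⟩

theorem bddBelow_sdpValues : BddBelow (sdpValues n α cbar r M) := by
  refine ⟨0, ?_⟩
  rintro v ⟨Y, -, rfl⟩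
  positivity

theorem sInf_sdpValues_le_sInf_popValues (hne : (popValues n α cbar r M).Nonempty) :
    sInf (sdpValues n α cbar r M) ≤ sInf (popValues n α cbar r M) :=
  csInf_le_csInf bddBelow_sdpValues hne popValues_subset_sdpValues

end OptimalValues

theorem sparse_moment_relaxation_feasibility_general
    {n : ℕ} (α cbar : ℝ) (r : Fin n → ℝ) (M : Fin n → Matrix (Fin 4) (Fin 4) ℝ)
    {ω : Fin n → ℝ} (hω : ∀ i, ω i ^ 2 = ω i) {q : Fin 4 → ℝ} (hq : ∑ a, q a ^ 2 = 1)
    {Y : Matrix (MomLbl n) (MomLbl n) ℝ} (hY : Y = momentMatrix ω q) :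
    Yᵀ = Y ∧ Y.PosSemidef ∧
    Y lbl1 lbl1 = 1 ∧
    (∀ i, Y (lblω i) (lblω i) = Y (lblω i) lbl1) ∧
    (∀ i a b, Y (lblωq i a) (lblωq i b) = Y (lblq a) (lblωq i b)) ∧
    (∀ i a, Y lbl1 (lblωq i a) = Y (lblω i) (lblq a)) ∧
    (∀ i a, Y (lblω i) (lblq a) = Y (lblω i) (lblωq i a)) ∧
    (∀ i j a b, Y (lblωq i a) (lblωq j b) = Y (lblωq j b) (lblωq i a)) ∧
    (∀ i j, ∑ a, Y (lblωq i a) (lblωq j a) = Y (lblω i) (lblω j)) ∧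
    ∑ i, Y (lblω i) lbl1 ^ 2 = ∑ i, ω i ^ 2 ∧
    (∑ i, ω i = α * n → ∑ i, Y (lblω i) lbl1 = α * n) ∧
    ((∀ i, ω i * (r i - 2 * ∑ a, ∑ b, q a * M i a b * q b) ≤ cbar ^ 2) →
      ∀ i, Y (lblω i) lbl1 * r i -
          2 * ∑ a, ∑ b, M i a b * Y (lblq a) (lblωq i b) ≤ cbar ^ 2) ∧
    (∑ i, ω i = α * n →
      (∀ i, ω i * (r i - 2 * ∑ a, ∑ b, q a * M i a b * q b) ≤ cbar ^ 2) →
      sInf (sdpValues n α cbar r M) ≤ sInf (popValues n α cbar r M)) := by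
  subst hY
  exact ⟨momentMatrix_transpose ω q, momentMatrix_posSemidef ω q, momentMatrix_lbl1_lbl1 ω q,
    fun i => momentMatrix_lblω_lblω_of_sq_eq_self q (hω i),
    fun i => momentMatrix_lblωq_lblωq_of_sq_eq_self q (hω i),
    momentMatrix_lbl1_lblωq ω q,
    fun i => momentMatrix_lblω_lblq_of_sq_eq_self q (hω i),
    fun _ _ _ _ => momentMatrix_comm ω q _ _,
    sum_momentMatrix_lblωq_lblωq ω hq,
    by simp only [momentMatrix_lblω_lbl1],
    fun hsum => by simpa only [momentMatrix_lblω_lbl1] using hsum,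
    fun hdata i => (momentMatrix_residual ω q i (r i) (M i)).trans_le (hdata i),
    fun hsum hdata => sInf_sdpValues_le_sInf_popValues ⟨_, ω, q, ⟨hω, hq, hsum, hdata⟩, rfl⟩⟩

/-- Feasibility half of the sparse moment relaxation for list-decodable rotation
search: the lifted matrix `X = m·mᵀ` of any feasible point is feasible for the
SDP, preserves the objective and the data constraints, and consequently the
optimal value of the SDP relaxation is at most that of the polynomial
optimization problem. -/
theorem sparse_moment_relaxation_feasibility
    (n : ℕ) (hn : 1 ≤ n) (α cbar : ℝ) (r : Fin n → ℝ)
    (M : Fin n → Matrix (Fin 4) (Fin 4) ℝ) (hM : ∀ i, (M i).IsSymm)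
    (ω : Fin n → ℝ) (hω : ∀ i, ω i ^ 2 = ω i)
    (q : Fin 4 → ℝ) (hq : (∑ a, q a ^ 2) = 1)
    (m : MomLbl n → ℝ) (hm : m = basisVec ω q)
    (Y : Matrix (MomLbl n) (MomLbl n) ℝ) (hY : Y = Matrix.vecMulVec m m) :
    Yᵀ = Y ∧ Y.PosSemidef ∧
    Y lbl1 lbl1 = 1 ∧
    (∀ i, Y (lblω i) (lblω i) = Y (lblω i) lbl1) ∧
    (∀ i a b, Y (lblωq i a) (lblωq i b) = Y (lblq a) (lblωq i b)) ∧
    (∀ i a, Y lbl1 (lblωq i a) = Y (lblω i) (lblq a)) ∧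
    (∀ i a, Y (lblω i) (lblq a) = Y (lblω i) (lblωq i a)) ∧
    (∀ i j a b, Y (lblωq i a) (lblωq j b) = Y (lblωq j b) (lblωq i a)) ∧
    (∀ i j, ∑ a, Y (lblωq i a) (lblωq j a) = Y (lblω i) (lblω j)) ∧
    (∑ i, (Y (lblω i) lbl1) ^ 2) = ∑ i, ω i ^ 2 ∧
    ((∑ i, ω i) = α * n → (∑ i, Y (lblω i) lbl1) = α * n) ∧
    ((∀ i, ω i * (r i - 2 * ∑ a, ∑ b, q a * M i a b * q b) ≤ cbar ^ 2) →
      ∀ i, Y (lblω i) lbl1 * r i -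
          2 * ∑ a, ∑ b, M i a b * Y (lblq a) (lblωq i b) ≤ cbar ^ 2) ∧
    ((∑ i, ω i) = α * n →
      (∀ i, ω i * (r i - 2 * ∑ a, ∑ b, q a * M i a b * q b) ≤ cbar ^ 2) →
      sInf {v : ℝ | ∃ Y' : Matrix (MomLbl n) (MomLbl n) ℝ,
          SDPFeasible n α cbar r M Y' ∧ v = ∑ i, (Y' (lblω i) lbl1) ^ 2} ≤
        sInf {v : ℝ | ∃ (ω' : Fin n → ℝ) (q' : Fin 4 → ℝ),
          POPFeasible n α cbar r M ω' q' ∧ v = ∑ i, ω' i ^ 2}) := by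
  subst hm
  exact sparse_moment_relaxation_feasibility_general α cbar r M hω hq hY
end
end
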